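/- arXiv:1508.04439 — 5 statements merged into one kernel-verified Lean document; each statement's English description precedes it below -/
import Mathlib

section
/- Let p and q be polynomials with real coefficients of degrees n and m respectively, with n > m, and let h(z) = p(z) + conj(q(z)) for z ∈ ℂ. Then the set of solutions z of h(z) = 0 satisfying Re(z) ≠ 0 and Im(z) ≠ 0 is finite and has at most n² − n elements. -/
open Polynomial

/-!
Put `w = conj z`. As `p - q` has real coefficients, a zero `z` of `h` which is not real gives a
point `(z, w)` on the curves `p(x) + (conj q)(y) = 0` and `((p - q)(x) - (p - q)(y)) / (x - y) = 0`,
of degrees `n` and `n - 1`. Their leading forms are proportional to `x ^ n` and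
`∑ i, x ^ i * y ^ (n - 1 - i)`, so for the degree-lexicographic order with `x < y` the leading
monomials are `x ^ n` and `y ^ (n - 1)`: modulo the two equations, every polynomial in `x` and `y`
is a combination of the `n * (n - 1)` monomials divisible by neither. Since polynomials interpolate
arbitrary values at finitely many points, there are at most `n * (n - 1)` points.
-/

lemma span_range_eq_span_image_of_reduces {R M ι β : Type*} [Semiring R] [AddCommMonoid M]
    [Module R M] [Preorder β] [WellFoundedLT β] (φ : ι → β) (v : ι → M) (s : Set ι)
    (h : ∀ a ∉ s, v a ∈ Submodule.span R (v '' {b | φ b < φ a})) :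
    Submodule.span R (Set.range v) = Submodule.span R (v '' s) := by
  refine le_antisymm (Submodule.span_le.2 ?_) (Submodule.span_mono (Set.image_subset_range v s))
  rintro _ ⟨a, rfl⟩
  induction a using WellFounded.induction (InvImage.wf φ wellFounded_lt) with
  | _ a ih =>
    by_cases ha : a ∈ s
    · exact Submodule.subset_span ⟨a, ha, rfl⟩
    · exact Submodule.span_le.2 (Set.image_subset_iff.2 ih) (h a ha)

/-- The key by which the degree-lexicographic order with `x < y` compares the monomials
`x ^ e.1 * y ^ e.2`: first the total degree, then the exponent of `y`. -/
def degLexKey (e : ℕ × ℕ) : ℕ ×ₗ ℕ :=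
  toLex (e.1 + e.2, e.2)

lemma degLexKey_lt_iff {e f : ℕ × ℕ} :
    degLexKey e < degLexKey f ↔ e.1 + e.2 < f.1 + f.2 ∨ e.1 + e.2 = f.1 + f.2 ∧ e.2 < f.2 :=
  Prod.Lex.toLex_lt_toLex

lemma degLexKey_add_lt_add_left {e f : ℕ × ℕ} (h : degLexKey e < degLexKey f) (c : ℕ × ℕ) :
    degLexKey (c + e) < degLexKey (c + f) := by
  simp only [degLexKey_lt_iff, Prod.fst_add, Prod.snd_add] at h ⊢
  omega

/-- The span of the monomials in two elements `x` and `y` of an algebra which precede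
`x ^ e.1 * y ^ e.2` in the degree-lexicographic order; membership of `x ^ e.1 * y ^ e.2` means that
`x` and `y` satisfy a polynomial relation with this leading monomial. -/
def lowerSpan (R : Type*) {A : Type*} [CommSemiring R] [CommSemiring A] [Algebra R A] (x y : A)
    (e : ℕ × ℕ) : Submodule R A :=
  Submodule.span R ((fun c : ℕ × ℕ => x ^ c.1 * y ^ c.2) '' {c | degLexKey c < degLexKey e})

section LowerSpan

variable {R A : Type*} [CommSemiring R] [CommSemiring A] [Algebra R A] {x y : A}

lemma monomial_mem_lowerSpan {i j : ℕ} {e : ℕ × ℕ} (h : degLexKey (i, j) < degLexKey e) :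
    x ^ i * y ^ j ∈ lowerSpan R x y e :=
  Submodule.subset_span ⟨(i, j), h, rfl⟩

lemma monomial_mul_mem_lowerSpan {e : ℕ × ℕ} {f : A} (hf : f ∈ lowerSpan R x y e) (c : ℕ × ℕ) :
    x ^ c.1 * y ^ c.2 * f ∈ lowerSpan R x y (c + e) := by
  refine (Submodule.map_span_le (LinearMap.mulLeft R (x ^ c.1 * y ^ c.2)) _ _).2 ?_
    (Submodule.mem_map_of_mem hf)
  rintro _ ⟨d, hd, rfl⟩
  have hmul : x ^ c.1 * y ^ c.2 * (x ^ d.1 * y ^ d.2) = x ^ (c.1 + d.1) * y ^ (c.2 + d.2) := by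
    ring
  rw [LinearMap.mulLeft_apply, hmul]
  exact monomial_mem_lowerSpan (degLexKey_add_lt_add_left hd c)

lemma monomial_mem_lowerSpan_self_of_le {e f : ℕ × ℕ} (hef : e ≤ f)
    (he : x ^ e.1 * y ^ e.2 ∈ lowerSpan R x y e) : x ^ f.1 * y ^ f.2 ∈ lowerSpan R x y f := by
  obtain ⟨c, rfl⟩ := exists_add_of_le hef
  rw [add_comm e c]
  convert monomial_mul_mem_lowerSpan he c using 1
  simp only [Prod.fst_add, Prod.snd_add]
  ring

lemma toSubmodule_adjoin_pair :
    Subalgebra.toSubmodule (Algebra.adjoin R {x, y}) =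
      Submodule.span R (Set.range fun c : ℕ × ℕ => x ^ c.1 * y ^ c.2) := by
  rw [Algebra.adjoin_eq_span]
  congr 1
  ext a
  simp [Submonoid.mem_closure_pair]

lemma toSubmodule_adjoin_pair_eq_span_box {m n : ℕ} (hx : x ^ m ∈ lowerSpan R x y (m, 0))
    (hy : y ^ n ∈ lowerSpan R x y (0, n)) :
    Subalgebra.toSubmodule (Algebra.adjoin R {x, y}) =
      Submodule.span R ((fun c : ℕ × ℕ => x ^ c.1 * y ^ c.2) '' Set.Iio m ×ˢ Set.Iio n) := by
  rw [toSubmodule_adjoin_pair]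
  refine span_range_eq_span_image_of_reduces degLexKey _ _ fun c hc => ?_
  have hc' : (m, 0) ≤ c ∨ (0, n) ≤ c := by
    simpa [Prod.le_def, imp_iff_not_or] using hc
  rcases hc' with hm | hn
  · exact monomial_mem_lowerSpan_self_of_le hm (by simpa using hx)
  · exact monomial_mem_lowerSpan_self_of_le hn (by simpa using hy)

lemma finrank_adjoin_pair_le [StrongRankCondition R] {m n : ℕ}
    (hx : x ^ m ∈ lowerSpan R x y (m, 0)) (hy : y ^ n ∈ lowerSpan R x y (0, n)) :
    Module.finrank R (Algebra.adjoin R {x, y}) ≤ m * n := by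
  classical
  let box : Finset (ℕ × ℕ) := Finset.range m ×ˢ Finset.range n
  have hspan : Subalgebra.toSubmodule (Algebra.adjoin R {x, y}) =
      Submodule.span R (box.image fun c => x ^ c.1 * y ^ c.2 : Finset A) := by
    simpa [box] using toSubmodule_adjoin_pair_eq_span_box hx hy
  calc Module.finrank R (Algebra.adjoin R {x, y})
      = Module.finrank R (Subalgebra.toSubmodule (Algebra.adjoin R {x, y})) := rfl
    _ ≤ (box.image fun c => x ^ c.1 * y ^ c.2).card := by
      rw [hspan]
      exact finrank_span_finset_le_card _
    _ ≤ box.card := Finset.card_image_le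
    _ = m * n := by simp [box]

lemma aeval_left_mem_lowerSpan {f : R[X]} {e : ℕ × ℕ} (hf : f.natDegree < e.1 + e.2) :
    aeval x f ∈ lowerSpan R x y e := by
  rw [aeval_eq_sum_range' hf]
  refine Submodule.sum_mem _ fun i hi => Submodule.smul_mem _ _ ?_
  have hi' := Finset.mem_range.1 hi
  simpa using monomial_mem_lowerSpan (R := R) (x := x) (y := y) (i := i) (j := 0) (e := e)
    (degLexKey_lt_iff.2 (.inl hi'))

lemma aeval_right_mem_lowerSpan {f : R[X]} {e : ℕ × ℕ} (hf : f.natDegree < e.1 + e.2) :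
    aeval y f ∈ lowerSpan R x y e := by
  rw [aeval_eq_sum_range' hf]
  refine Submodule.sum_mem _ fun j hj => Submodule.smul_mem _ _ ?_
  have hj' := Finset.mem_range.1 hj
  simpa using monomial_mem_lowerSpan (R := R) (x := x) (y := y) (i := 0) (j := j) (e := e)
    (degLexKey_lt_iff.2 (.inl (by simpa using hj')))

end LowerSpan

/-- The divided difference `(r(x) - r(y)) / (x - y)` of a polynomial `r`, written without division
by means of `(x ^ k - y ^ k) / (x - y) = ∑ i < k, x ^ i * y ^ (k - 1 - i)`. -/
noncomputable def dividedDifference {R A : Type*} [CommSemiring R] [CommSemiring A] [Algebra R A]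
    (r : R[X]) (x y : A) : A :=
  r.sum fun k a => a • ∑ i ∈ Finset.range k, x ^ i * y ^ (k - 1 - i)

section LeadingMonomials

variable {R A : Type*} [CommRing R] [CommRing A] [Algebra R A] {x y : A}

lemma dividedDifference_mul_sub (r : R[X]) (x y : A) :
    dividedDifference r x y * (x - y) = aeval x r - aeval y r := by
  simp only [dividedDifference, aeval_def, eval₂_eq_sum, sum_def]
  rw [Finset.sum_mul, ← Finset.sum_sub_distrib]
  refine Finset.sum_congr rfl fun k _ => ?_
  rw [smul_mul_assoc, geom_sum₂_mul, Algebra.smul_def, mul_sub]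

lemma pow_mem_lowerSpan_of_aeval_add_aeval_eq_zero {p q : R[X]} (hp : IsUnit p.leadingCoeff)
    (hqp : q.natDegree < p.natDegree) (h : aeval x p + aeval y q = 0) :
    x ^ p.natDegree ∈ lowerSpan R x y (p.natDegree, 0) := by
  rw [← Submodule.smul_mem_iff_of_isUnit _ hp]
  have hlead : p.leadingCoeff • x ^ p.natDegree = -(aeval x p.eraseLead + aeval y q) := by
    have := congrArg (aeval x) p.eraseLead_add_monomial_natDegree_leadingCoeff
    rw [map_add, aeval_monomial, ← Algebra.smul_def] at this
    linear_combination this + h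
  rw [hlead]
  refine Submodule.neg_mem _ (Submodule.add_mem _ (aeval_left_mem_lowerSpan ?_)
    (aeval_right_mem_lowerSpan hqp))
  have := p.eraseLead_natDegree_le
  simp only [add_zero]
  omega

lemma pow_mem_lowerSpan_of_dividedDifference_eq_zero {r : R[X]} (hr : IsUnit r.leadingCoeff)
    {n : ℕ} (hn : r.natDegree = n + 1) (h : dividedDifference r x y = 0) :
    y ^ n ∈ lowerSpan R x y (0, n) := by
  rw [← Submodule.smul_mem_iff_of_isUnit _ hr, leadingCoeff, hn]
  have hlead : r.coeff (n + 1) • y ^ n =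
      -(∑ k ∈ Finset.range (n + 1),
          r.coeff k • ∑ i ∈ Finset.range k, x ^ i * y ^ (k - 1 - i) +
        r.coeff (n + 1) • ∑ i ∈ Finset.range n, x ^ (i + 1) * y ^ (n - (i + 1))) := by
    rw [dividedDifference, sum_over_range _ (by simp only [zero_smul, implies_true]), hn,
      Finset.sum_range_succ, Nat.add_sub_cancel,
      Finset.sum_range_succ' (fun i => x ^ i * y ^ (n - i)), smul_add,
      pow_zero, one_mul, Nat.sub_zero] at h
    linear_combination h
  rw [hlead]
  refine Submodule.neg_mem _ (Submodule.add_mem _ ?_ ?_)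
  · refine Submodule.sum_mem _ fun k hk =>
      Submodule.smul_mem _ _ (Submodule.sum_mem _ fun i hi => ?_)
    have hk' := Finset.mem_range.1 hk
    have hi' := Finset.mem_range.1 hi
    exact monomial_mem_lowerSpan (degLexKey_lt_iff.2 (.inl (by simp only; omega)))
  · refine Submodule.smul_mem _ _ (Submodule.sum_mem _ fun i hi => ?_)
    have hi' := Finset.mem_range.1 hi
    exact monomial_mem_lowerSpan (degLexKey_lt_iff.2 (.inr (by simp only; omega)))

end LeadingMonomials

section FinitePoints

variable {K ι : Type*} [Field K]

lemma exists_mem_separating_of_separatesPoints {S : Subalgebra K (ι → K)}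
    (hS : (S : Set (ι → K)).SeparatesPoints) {i j : ι} (hij : i ≠ j) :
    ∃ f ∈ S, f i = 1 ∧ f j = 0 := by
  obtain ⟨g, hgS, hg⟩ := hS hij
  refine ⟨(g i - g j)⁻¹ • (g - algebraMap K _ (g j)),
    S.smul_mem (S.sub_mem hgS (S.algebraMap_mem _)) _, ?_, ?_⟩
  · simpa using inv_mul_cancel₀ (sub_ne_zero.2 hg)
  · simp

theorem eq_top_of_separatesPoints [Finite ι] {S : Subalgebra K (ι → K)}
    (hS : (S : Set (ι → K)).SeparatesPoints) : S = ⊤ := by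
  classical
  cases nonempty_fintype ι
  have hsingle (i : ι) : Pi.single i 1 ∈ S := by
    choose! f hfS hfi hfj using fun j (hj : i ≠ j) =>
      exists_mem_separating_of_separatesPoints hS hj
    have hprod : Pi.single i 1 = ∏ j ∈ Finset.univ.erase i, f j := by
      ext k
      rw [Finset.prod_apply]
      obtain rfl | hk := eq_or_ne i k
      · rw [Pi.single_eq_same]
        exact (Finset.prod_eq_one fun j hj => hfi j (Finset.ne_of_mem_erase hj).symm).symm
      · rw [Pi.single_eq_of_ne hk.symm]
        have hk_mem : k ∈ Finset.univ.erase i := by simpa using hk.symm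
        exact (Finset.prod_eq_zero (f := fun j => f j k) hk_mem (hfj k hk)).symm
    rw [hprod]
    exact prod_mem fun j hj => hfS j (Finset.ne_of_mem_erase hj).symm
  refine eq_top_iff.2 fun f _ => ?_
  rw [pi_eq_sum_univ' f]
  exact sum_mem fun i _ => S.smul_mem (by simpa [Pi.single_apply] using hsingle i) _

lemma adjoin_pair_eq_top_of_injective [Finite ι] {x y : ι → K}
    (hxy : Function.Injective fun i => (x i, y i)) : Algebra.adjoin K {x, y} = ⊤ := by
  refine eq_top_of_separatesPoints fun i j hij => ?_
  have hne : x i ≠ x j ∨ y i ≠ y j := by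
    simpa [imp_iff_not_or] using hxy.ne hij
  rcases hne with hx | hy
  · exact ⟨x, Algebra.subset_adjoin (by simp), hx⟩
  · exact ⟨y, Algebra.subset_adjoin (by simp), hy⟩

theorem card_le_of_eval_add_eval_eq_zero_of_eval_eq [Fintype ι] {p q r : K[X]}
    (hqp : q.natDegree < p.natDegree) (hr : r.natDegree ≠ 0) {x y : ι → K}
    (hxy : Function.Injective fun i => (x i, y i)) (hne : ∀ i, x i ≠ y i)
    (hpq_zero : ∀ i, p.eval (x i) + q.eval (y i) = 0) (hr_eq : ∀ i, r.eval (x i) = r.eval (y i)) :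
    Fintype.card ι ≤ p.natDegree * (r.natDegree - 1) := by
  have hx : x ^ p.natDegree ∈ lowerSpan K x y (p.natDegree, 0) :=
    pow_mem_lowerSpan_of_aeval_add_aeval_eq_zero
      (isUnit_iff_ne_zero.2 (leadingCoeff_ne_zero.2 (ne_zero_of_natDegree_gt hqp))) hqp
      (funext fun i => by simpa [aeval_pi_apply₂] using hpq_zero i)
  have hdiff : dividedDifference r x y = 0 := by
    have hmul : dividedDifference r x y * (x - y) = 0 := by
      rw [dividedDifference_mul_sub, sub_eq_zero]
      exact funext fun i => by simpa [aeval_pi_apply₂] using hr_eq i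
    exact funext fun i =>
      (mul_eq_zero.1 (congrFun hmul i)).resolve_right (sub_ne_zero.2 (hne i))
  have hy : y ^ (r.natDegree - 1) ∈ lowerSpan K x y (0, r.natDegree - 1) :=
    pow_mem_lowerSpan_of_dividedDifference_eq_zero
      (isUnit_iff_ne_zero.2 (leadingCoeff_ne_zero.2 fun h0 => hr (by simp [h0])))
      (Nat.succ_pred_eq_of_ne_zero hr).symm hdiff
  calc Fintype.card ι = Module.finrank K (ι → K) := (Module.finrank_fintype_fun_eq_card K).symm
    _ = Module.finrank K (Algebra.adjoin K {x, y}) := by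
      rw [adjoin_pair_eq_top_of_injective hxy, subalgebra_top_finrank_eq_submodule_top_finrank,
        finrank_top]
    _ ≤ p.natDegree * (r.natDegree - 1) := finrank_adjoin_pair_le hx hy

end FinitePoints

lemma encard_le_of_forall_finset_card_le {α : Type*} {T : Set α} {N : ℕ}
    (h : ∀ S : Finset α, (S : Set α) ⊆ T → S.card ≤ N) : T.encard ≤ N := by
  by_contra! hlt
  obtain ⟨S, hST, hS⟩ := Set.exists_subset_encard_eq (Order.add_one_le_of_lt hlt)
  have hfin : S.Finite := Set.finite_of_encard_eq_coe (k := N + 1) (by simpa using hS)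
  lift S to Finset α using hfin
  rw [Set.encard_coe_eq_coe_finsetCard] at hS
  have := h S hST
  norm_cast at hS
  omega

theorem harmonic_real_coeff_zeros_off_axes_general {K : Type*} [Field K] [StarRing K] {p q : K[X]}
    (hpq : ∀ k, IsSelfAdjoint ((p - q).coeff k)) (hqp : q.natDegree < p.natDegree) :
    {z : K | p.eval z + starRingEnd K (q.eval z) = 0 ∧ ¬ IsSelfAdjoint z}.encard ≤
      (p.natDegree ^ 2 - p.natDegree : ℕ) := by
  have hr : (p - q).map (starRingEnd K) = p - q := by
    ext k
    rw [coeff_map]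
    exact hpq k
  have hdeg : (p - q).natDegree = p.natDegree := natDegree_sub_eq_left_of_natDegree_lt hqp
  refine encard_le_of_forall_finset_card_le fun S hS => ?_
  have heq (z : S) : (p - q).eval (z : K) = (p - q).eval (starRingEnd K z) := by
    have hp_eval : p.eval (z : K) = -starRingEnd K (q.eval (z : K)) :=
      eq_neg_of_add_eq_zero_left (hS z.2).1
    conv_rhs => rw [← hr, eval_map_apply]
    rw [eval_sub, hp_eval, map_sub, map_neg, starRingEnd_self_apply]
    ring
  calc S.card = Fintype.card S := (Fintype.card_coe S).symm
    _ ≤ p.natDegree * ((p - q).natDegree - 1) :=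
      card_le_of_eval_add_eval_eq_zero_of_eval_eq (q := q.map (starRingEnd K)) (r := p - q)
        (by rwa [natDegree_map]) (by omega)
        (x := fun z : S => (z : K)) (y := fun z : S => starRingEnd K z)
        (fun z w hzw => Subtype.ext (congrArg Prod.fst hzw))
        (fun z hz => (hS z.2).2 hz.symm)
        (fun z => by rw [eval_map_apply]; exact (hS z.2).1) heq
    _ = p.natDegree ^ 2 - p.natDegree := by rw [hdeg, Nat.mul_sub_one, sq]

/-- Theorem 1: a harmonic polynomial `h(z) = p(z) + conj (q(z))` with real
coefficients, `deg p = n > deg q = m`, has at most `n² - n` zeros off the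
coordinate axes. -/
theorem harmonic_real_coeff_zeros_off_axes
    (n m : ℕ) (p q : Polynomial ℂ)
    (hpreal : ∀ k, (p.coeff k).im = 0) (hqreal : ∀ k, (q.coeff k).im = 0)
    (hp : p.natDegree = n) (hq : q.natDegree = m) (hnm : m < n) :
    {z : ℂ | p.eval z + (starRingEnd ℂ) (q.eval z) = 0 ∧ z.re ≠ 0 ∧ z.im ≠ 0}.Finite ∧
    {z : ℂ | p.eval z + (starRingEnd ℂ) (q.eval z) = 0 ∧ z.re ≠ 0 ∧ z.im ≠ 0}.ncard
      ≤ n ^ 2 - n := by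
  subst hp hq
  refine Set.encard_le_coe_iff_finite_ncard_le.1 (le_trans (Set.encard_le_encard ?_)
    (harmonic_real_coeff_zeros_off_axes_general (fun k => ?_) hnm))
  · exact fun z hz => ⟨hz.1, fun hz' => hz.2.2 (Complex.conj_eq_iff_im.1 hz')⟩
  · exact Complex.conj_eq_iff_im.2 (by simp [hpreal, hqreal])
end

section
/- For all integers n and m with 1 ≤ m < n, there exist polynomials p, q with complex coefficients, of degrees n and m respectively, such that the zero set {z ∈ ℂ : p(z) + conj(q(z)) = 0} has at least 3n − 2 elements. -/
open Polynomial

open Asymptotics Bornology Filter Topology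

/-!
Let `s` be a real polynomial of degree less than `n` and let `T` be the `n`-th Chebyshev
polynomial. For real `ε`, the harmonic polynomial `(s + i ε T) + conj ∘ (-s)` equals
`i (2 Im s + ε T)`, so its zeros are the points where `T` is real and `2 Im s = -ε T`.

Write `z = cos (a + i v)`, so that `T z = cos (n a + i n v)`. On the real axis `Im s = 0`, so the
`n` roots of `T` are zeros. On each of the `n - 1` hyperbola branches `a = k π / n`, `0 < k < n`,
the value `T z = ± cosh (n v)` is real and dominates `s` at both ends of the branch. If `s'` does
not vanish at the vertex `cos a`, then `Im s` changes sign there. Hence, for small `ε > 0`,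
`∓ 2 Im s` exceeds `ε cosh (n v)` somewhere on the branch but lies below it at both ends, and the
two agree at two points at least. The total is `n + 2 (n - 1) = 3 n - 2`.
-/

section RealAnalysis

theorem exists_pos_of_hasDerivAt_ne_zero {F : ℝ → ℝ} {F' x : ℝ} (hF : HasDerivAt F F' x)
    (hx : F x = 0) (hF' : F' ≠ 0) : ∃ y, 0 < F y := by
  by_contra! hnonpos
  have hmax : IsLocalMax F x := .of_forall fun y => (hnonpos y).trans_eq hx.symm
  exact hF' (hmax.hasDerivAt_eq_zero hF)

theorem exists_finset_card_two_eq {F G : ℝ → ℝ} (hF : Continuous F) (hG : Continuous G)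
    (hlt : ∀ᶠ v in cobounded ℝ, F v < G v) {x : ℝ} (hx : G x < F x) :
    ∃ V : Finset ℝ, V.card = 2 ∧ ∀ v ∈ V, F v = G v := by
  have hle : F ≤ᶠ[cobounded ℝ] G := hlt.mono fun _ => le_of_lt
  obtain ⟨u, hux, hu⟩ := isPreconnected_Iic.intermediate_value₂_eventually₁ (Set.self_mem_Iic)
    (le_principal_iff.mpr (Iic_mem_atBot x)) hG.continuousOn hF.continuousOn hx.le
    (hle.filter_mono IsOrderBornology.atBot_le_cobounded)
  obtain ⟨w, hxw, hw⟩ := isPreconnected_Ici.intermediate_value₂_eventually₁ (Set.self_mem_Ici)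
    (le_principal_iff.mpr (Ici_mem_atTop x)) hG.continuousOn hF.continuousOn hx.le
    (hle.filter_mono IsOrderBornology.atTop_le_cobounded)
  have huw : u ≠ w := by
    rintro rfl
    obtain rfl : u = x := le_antisymm hux hxw
    exact hx.ne hu
  exact ⟨{u, w}, Finset.card_pair huw, by simp [hu, hw]⟩

theorem eventually_exists_finset_card_two_eq_mul {F G : ℝ → ℝ} (hF : Continuous F)
    (hG : Continuous G) (hG₀ : ∀ v, 0 < G v) (hFG : F =o[cobounded ℝ] G) {x : ℝ}
    (hx : 0 < F x) :
    ∀ᶠ ε in 𝓝[>] (0 : ℝ), ∃ V : Finset ℝ, V.card = 2 ∧ ∀ v ∈ V, F v = ε * G v := by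
  have hsmall : ∀ᶠ ε in 𝓝[>] (0 : ℝ), ε < F x / G x :=
    eventually_nhdsWithin_of_eventually_nhds (eventually_lt_nhds (div_pos hx (hG₀ x)))
  filter_upwards [hsmall, self_mem_nhdsWithin] with ε hεx hε
  refine exists_finset_card_two_eq hF (hG.const_mul ε) ?_ ((lt_div_iff₀ (hG₀ x)).mp hεx)
  filter_upwards [hFG.def (half_pos hε)] with v hv
  calc
    F v ≤ ‖F v‖ := Real.le_norm_self _
    _ ≤ ε / 2 * ‖G v‖ := hv
    _ = ε / 2 * G v := by rw [Real.norm_of_nonneg (hG₀ v).le]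
    _ < ε * G v := mul_lt_mul_of_pos_right (half_lt_self hε) (hG₀ v)

end RealAnalysis

section EllipticPoint

/-- The point `cos (a + i v)` with elliptic coordinates `(a, v)`: fixing `v` gives an ellipse and
fixing `a` a branch of a hyperbola, with foci `±1`, whose vertex `cos a` has height `v = 0`. -/
noncomputable def ellipticPoint (a v : ℝ) : ℂ := Complex.cos (a + v * Complex.I)

theorem ellipticPoint_zero (a : ℝ) : ellipticPoint a 0 = (Real.cos a : ℂ) := by
  simp [ellipticPoint]

theorem ellipticPoint_eq (a v : ℝ) :
    ellipticPoint a v =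
      (Real.cos a * Real.cosh v : ℝ) - (Real.sin a * Real.sinh v : ℝ) * Complex.I := by
  simp [ellipticPoint, Complex.cos_add_mul_I]

theorem ellipticPoint_im (a v : ℝ) : (ellipticPoint a v).im = -(Real.sin a * Real.sinh v) := by
  rw [ellipticPoint_eq, Complex.sub_im, Complex.ofReal_im, Complex.im_ofReal_mul, Complex.I_im,
    mul_one, zero_sub]

theorem ellipticPoint_eq_ofReal_of_sin_eq_zero {a : ℝ} (ha : Real.sin a = 0) (v : ℝ) :
    ellipticPoint a v = (Real.cos a * Real.cosh v : ℝ) := by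
  simp [ellipticPoint_eq, ha]

theorem continuous_ellipticPoint (a : ℝ) : Continuous (ellipticPoint a) := by
  unfold ellipticPoint
  fun_prop

theorem ellipticPoint_inj {a b v w : ℝ} (ha : a ∈ Set.Ioo 0 Real.pi)
    (hb : b ∈ Set.Ioo 0 Real.pi) : ellipticPoint a v = ellipticPoint b w ↔ a = b ∧ v = w := by
  refine ⟨fun h => ?_, by rintro ⟨rfl, rfl⟩; rfl⟩
  obtain ⟨ha₀, haπ⟩ := ha
  obtain ⟨hb₀, hbπ⟩ := hb
  obtain ⟨k, hk | hk⟩ := Complex.cos_eq_cos_iff.mp h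
  · have hre : b = 2 * k * Real.pi + a := by simpa using congrArg Complex.re hk
    have him : w = v := by simpa using congrArg Complex.im hk
    have hk_lt : (k : ℝ) < 1 := by nlinarith
    have hlt_k : (-1 : ℝ) < k := by nlinarith
    norm_cast at hk_lt hlt_k
    obtain rfl : k = 0 := by omega
    simp [hre, him]
  · have hre : b = 2 * k * Real.pi - a := by simpa using congrArg Complex.re hk
    have hk_lt : (k : ℝ) < 1 := by nlinarith
    have hlt_k : (0 : ℝ) < k := by nlinarith
    norm_cast at hk_lt hlt_k
    omega

theorem tendsto_ellipticPoint_cobounded {a : ℝ} (ha : Real.sin a ≠ 0) :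
    Tendsto (ellipticPoint a) (cobounded ℝ) (cobounded ℂ) := by
  rw [← tendsto_norm_atTop_iff_cobounded]
  refine tendsto_atTop_mono (fun v => ?_)
    (tendsto_norm_cobounded_atTop.const_mul_atTop (abs_pos.mpr ha))
  calc
    |Real.sin a| * ‖v‖ ≤ |Real.sin a| * |Real.sinh v| := by
      rw [Real.abs_sinh, Real.norm_eq_abs]
      gcongr
      exact Real.self_le_sinh_iff.mpr (abs_nonneg v)
    _ = |(ellipticPoint a v).im| := by rw [ellipticPoint_im, abs_neg, abs_mul]
    _ ≤ ‖ellipticPoint a v‖ := Complex.abs_im_le_norm _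

theorem im_aeval_ellipticPoint_zero (s : ℝ[X]) (a : ℝ) :
    (aeval (ellipticPoint a 0) s).im = 0 := by
  rw [ellipticPoint_zero, ← Complex.coe_algebraMap, aeval_algebraMap_apply]
  simp

theorem hasDerivAt_ellipticPoint_zero (a : ℝ) :
    HasDerivAt (ellipticPoint a) (-Real.sin a * Complex.I) 0 := by
  have hlin : HasDerivAt (fun v : ℝ => (a + v * Complex.I : ℂ)) Complex.I 0 := by
    simpa using ((hasDerivAt_id (0 : ℝ)).ofReal_comp.mul_const Complex.I).const_add (a : ℂ)
  have hcos := (Complex.hasDerivAt_cos (a + (0 : ℝ) * Complex.I)).comp (0 : ℝ) hlin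
  rwa [Complex.ofReal_zero, zero_mul, add_zero, ← Complex.ofReal_sin] at hcos

theorem hasDerivAt_im_aeval_ellipticPoint_zero (s : ℝ[X]) (a : ℝ) :
    HasDerivAt (fun v => (aeval (ellipticPoint a v) s).im)
      (-(Real.sin a * s.derivative.eval (Real.cos a))) 0 := by
  have hs := (s.hasDerivAt_aeval (ellipticPoint a 0)).comp (0 : ℝ)
    (hasDerivAt_ellipticPoint_zero a)
  rw [ellipticPoint_zero, ← Complex.coe_algebraMap, aeval_algebraMap_apply] at hs
  refine (Complex.imCLM.hasFDerivAt.comp_hasDerivAt (0 : ℝ) hs).congr_deriv ?_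
  simp [-Complex.ofReal_sin, mul_comm]

theorem eval_T_ellipticPoint (n : ℕ) (a v : ℝ) :
    (Chebyshev.T ℂ n).eval (ellipticPoint a v) = ellipticPoint (n * a) (n * v) := by
  rw [ellipticPoint, Chebyshev.T_complex_cos, ellipticPoint]
  push_cast
  ring_nf

theorem exists_finset_card_eq_of_ellipticPoint_mem {Z : Set ℂ} {A B : Finset ℝ} {k : ℕ}
    (hA : ∀ a ∈ A, a ∈ Set.Ioo 0 Real.pi) (hB : ∀ b ∈ B, b ∈ Set.Ioo 0 Real.pi)
    (hBZ : ∀ b ∈ B, ellipticPoint b 0 ∈ Z)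
    (hAZ : ∀ a ∈ A, ∃ V : Finset ℝ, V.card = k ∧ ∀ v ∈ V, v ≠ 0 ∧ ellipticPoint a v ∈ Z) :
    ∃ S : Finset ℂ, S.card = B.card + A.card * k ∧ ∀ z ∈ S, z ∈ Z := by
  choose! V hVk hV using hAZ
  set P : Finset (Σ _ : ℝ, ℝ) := B.sigma (fun _ => {0}) with hP
  set Q : Finset (Σ _ : ℝ, ℝ) := A.sigma V with hQ
  have hPQ : Disjoint P Q := by
    rw [Finset.disjoint_left]
    rintro ⟨a, v⟩ hp hq
    simp only [hP, hQ, Finset.mem_sigma, Finset.mem_singleton] at hp hq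
    exact (hV a hq.1 v hq.2).1 hp.2
  have hangle : ∀ x ∈ P ∪ Q, x.1 ∈ Set.Ioo 0 Real.pi := by
    intro x hx
    rcases Finset.mem_union.mp hx with hx | hx
    · exact hB _ (Finset.mem_sigma.mp hx).1
    · exact hA _ (Finset.mem_sigma.mp hx).1
  have hinj : Set.InjOn (fun x : Σ _ : ℝ, ℝ => ellipticPoint x.1 x.2) ↑(P ∪ Q) := by
    rintro ⟨a, v⟩ hx ⟨b, w⟩ hy hxy
    obtain ⟨rfl, rfl⟩ := (ellipticPoint_inj (hangle _ hx) (hangle _ hy)).mp hxy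
    rfl
  refine ⟨(P ∪ Q).image fun x => ellipticPoint x.1 x.2, ?_, ?_⟩
  · rw [Finset.card_image_of_injOn hinj, Finset.card_union_of_disjoint hPQ, Finset.card_sigma,
      Finset.card_sigma, Finset.sum_congr rfl hVk]
    simp
  · rw [Finset.forall_mem_image]
    rintro ⟨a, v⟩ hx
    simp only [hP, hQ, Finset.mem_union, Finset.mem_sigma, Finset.mem_singleton] at hx
    rcases hx with ⟨ha, rfl⟩ | ⟨ha, hv⟩
    · exact hBZ a ha
    · exact (hV a ha v hv).2

end EllipticPoint

section CriticalAngles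

theorem injective_natCast_add_mul_pi_div {d : ℝ} (hd : d ≠ 0) (c : ℝ) :
    Function.Injective fun k : ℕ => (k + c) * Real.pi / d := by
  intro k l hkl
  exact_mod_cast add_right_cancel (mul_right_cancel₀ Real.pi_ne_zero ((div_left_inj' hd).mp hkl))

theorem mul_pi_div_mem_Ioo {x d : ℝ} (hx : 0 < x) (hxd : x < d) :
    x * Real.pi / d ∈ Set.Ioo 0 Real.pi := by
  have hd : 0 < d := hx.trans hxd
  refine ⟨by positivity, ?_⟩
  rw [div_lt_iff₀ hd, mul_comm]
  exact mul_lt_mul_of_pos_left hxd Real.pi_pos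

theorem exists_finset_cos_mul_eq_zero (n : ℕ) :
    ∃ B : Finset ℝ, B.card = n ∧ ∀ b ∈ B, b ∈ Set.Ioo 0 Real.pi ∧ Real.cos (n * b) = 0 := by
  rcases eq_or_ne n 0 with rfl | hn
  · exact ⟨∅, by simp⟩
  have hn' : (n : ℝ) ≠ 0 := by exact_mod_cast hn
  refine ⟨(Finset.range n).image fun k : ℕ => (k + 1 / 2 : ℝ) * Real.pi / n, ?_, ?_⟩
  · rw [Finset.card_image_of_injective _ (injective_natCast_add_mul_pi_div hn' _),
      Finset.card_range]
  rw [Finset.forall_mem_image]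
  intro k hk
  have hkn : (k + 1 : ℝ) ≤ n := by exact_mod_cast Finset.mem_range.mp hk
  refine ⟨mul_pi_div_mem_Ioo (by positivity) (by linarith), ?_⟩
  rw [mul_div_cancel₀ _ hn', Real.cos_eq_zero_iff]
  exact ⟨k, by push_cast; ring⟩

theorem exists_finset_sin_mul_eq_zero (n : ℕ) :
    ∃ A : Finset ℝ, A.card = n - 1 ∧
      ∀ a ∈ A, a ∈ Set.Ioo 0 Real.pi ∧ Real.sin (n * a) = 0 := by
  rcases eq_or_ne n 0 with rfl | hn
  · exact ⟨∅, by simp⟩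
  have hn' : (n : ℝ) ≠ 0 := by exact_mod_cast hn
  refine ⟨(Finset.range (n - 1)).image fun k : ℕ => (k + 1 : ℝ) * Real.pi / n, ?_, ?_⟩
  · rw [Finset.card_image_of_injective _ (injective_natCast_add_mul_pi_div hn' _),
      Finset.card_range]
  rw [Finset.forall_mem_image]
  intro k hk
  have hkn : (k + 1 : ℝ) < n := by
    exact_mod_cast Nat.add_lt_of_lt_sub (Finset.mem_range.mp hk)
  refine ⟨mul_pi_div_mem_Ioo (by positivity) hkn, ?_⟩
  rw [mul_div_cancel₀ _ hn']
  exact_mod_cast Real.sin_nat_mul_pi (k + 1)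

end CriticalAngles

section HarmonicZeros

theorem natDegree_add_C_mul_T {R : Type*} [CommRing R] [IsDomain R] [NeZero (2 : R)] {n : ℕ}
    {f : R[X]} (hf : f.degree < n) {c : R} (hc : c ≠ 0) :
    (f + C c * Chebyshev.T R n).natDegree = n := by
  have hT : (C c * Chebyshev.T R n).degree = n := by
    rw [degree_C_mul hc, Chebyshev.degree_T, Int.natAbs_natCast]
  exact natDegree_eq_of_degree_eq_some <|
    (degree_add_eq_right_of_degree_lt (hf.trans_eq hT.symm)).trans hT

theorem derivative_X_add_one_pow_eval_cos_ne_zero {m : ℕ} (hm : m ≠ 0) {a : ℝ}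
    (ha : a ∈ Set.Ioo 0 Real.pi) :
    (derivative ((X + 1 : ℝ[X]) ^ m)).eval (Real.cos a) ≠ 0 := by
  have hcos : -1 < Real.cos a := by
    simpa using Real.cos_lt_cos_of_nonneg_of_le_pi ha.1.le le_rfl ha.2
  have hcos' : Real.cos a + 1 ≠ 0 := by linarith
  simp [derivative_pow, hcos', hm]

theorem eval_add_conj_eval_neg (s t : ℂ[X]) (ε : ℝ) (z : ℂ) :
    (s + C (ε * Complex.I) * t).eval z + (starRingEnd ℂ) ((-s).eval z) =
      Complex.I * (2 * (s.eval z).im + ε * t.eval z) := by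
  have hsub := Complex.sub_conj (s.eval z)
  push_cast at hsub
  simp only [eval_add, eval_mul, eval_C, eval_neg, map_neg]
  linear_combination hsub

theorem isLittleO_im_aeval_ellipticPoint {n : ℕ} {s : ℝ[X]} (hs : s.degree < n) {a : ℝ}
    (ha : Real.sin a ≠ 0) (hna : Real.sin (n * a) = 0) :
    (fun v => (aeval (ellipticPoint a v) s).im) =o[cobounded ℝ] fun v => Real.cosh (n * v) := by
  have hdeg : (s.map (algebraMap ℝ ℂ)).degree < (Chebyshev.T ℂ n).degree := by
    simpa [Chebyshev.degree_T] using hs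
  calc
    (fun v => (aeval (ellipticPoint a v) s).im)
        =O[cobounded ℝ] fun v => (s.map (algebraMap ℝ ℂ)).eval (ellipticPoint a v) :=
      isBigO_of_le _ fun v => by
        rw [eval_map_algebraMap]
        exact Complex.abs_im_le_norm _
    _ =o[cobounded ℝ] fun v => (Chebyshev.T ℂ n).eval (ellipticPoint a v) :=
      (isLittleO_cobounded_of_degree_lt hdeg).comp_tendsto (tendsto_ellipticPoint_cobounded ha)
    _ =O[cobounded ℝ] fun v => Real.cosh (n * v) :=
      isBigO_of_le _ fun v => by
        rw [eval_T_ellipticPoint, ellipticPoint_eq_ofReal_of_sin_eq_zero hna, Complex.norm_real,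
          norm_mul]
        exact mul_le_of_le_one_left (norm_nonneg _) (Real.abs_cos_le_one _)

theorem eventually_exists_finset_zeros_of_sin_mul_eq_zero {n : ℕ} {s : ℝ[X]} (hs : s.degree < n)
    {a : ℝ} (ha : Real.sin a ≠ 0) (hna : Real.sin (n * a) = 0)
    (hs' : s.derivative.eval (Real.cos a) ≠ 0) :
    ∀ᶠ ε : ℝ in 𝓝[>] 0, ∃ V : Finset ℝ, V.card = 2 ∧ ∀ v ∈ V, v ≠ 0 ∧
      2 * ((aeval (ellipticPoint a v) s).im : ℂ) +
        ε * (Chebyshev.T ℂ n).eval (ellipticPoint a v) = 0 := by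
  set c := Real.cos (n * a)
  set f : ℝ → ℝ := fun v => (aeval (ellipticPoint a v) s).im
  have hc : c * c = 1 := by simpa [hna, sq] using Real.sin_sq_add_cos_sq (n * a)
  have hc₀ : c ≠ 0 := left_ne_zero_of_mul_eq_one hc
  have hf₀ : f 0 = 0 := im_aeval_ellipticPoint_zero s a
  have hf_cont : Continuous f :=
    Complex.continuous_im.comp (s.continuous_aeval.comp (continuous_ellipticPoint a))
  have hcosh_cont : Continuous fun v => Real.cosh (n * v) :=
    Real.continuous_cosh.comp (continuous_const_mul (n : ℝ))
  have hlittleO : (fun v => -2 * c * f v) =o[cobounded ℝ] fun v => Real.cosh (n * v) :=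
    (isLittleO_im_aeval_ellipticPoint hs ha hna).const_mul_left _
  obtain ⟨x, hx⟩ : ∃ x, 0 < -2 * c * f x :=
    exists_pos_of_hasDerivAt_ne_zero
      ((hasDerivAt_im_aeval_ellipticPoint_zero s a).const_mul (-2 * c))
      (mul_eq_zero_of_right _ hf₀) (by simp [hc₀, ha, hs'])
  filter_upwards [self_mem_nhdsWithin, eventually_exists_finset_card_two_eq_mul
    (hf_cont.const_mul _) hcosh_cont (fun v => Real.cosh_pos _) hlittleO hx]
    with ε hε ⟨V, hV_card, hV⟩
  refine ⟨V, hV_card, fun v hv => ⟨?_, ?_⟩⟩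
  · rintro rfl
    have hε₀ : 0 = ε := by simpa [hf₀] using hV 0 hv
    exact (Set.mem_Ioi.mp hε).ne hε₀
  · have hfv : 2 * f v + ε * (c * Real.cosh (n * v)) = 0 := by
      linear_combination (-c) * hV v hv - 2 * f v * hc
    rw [eval_T_ellipticPoint, ellipticPoint_eq_ofReal_of_sin_eq_zero hna]
    exact_mod_cast hfv

theorem eventually_exists_finset_zeros {n : ℕ} {s : ℝ[X]} (hs : s.degree < n)
    (hs' : ∀ a ∈ Set.Ioo 0 Real.pi, Real.sin (n * a) = 0 → s.derivative.eval (Real.cos a) ≠ 0) :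
    ∀ᶠ ε : ℝ in 𝓝[>] 0, ∃ S : Finset ℂ, S.card = 3 * n - 2 ∧
      ∀ z ∈ S, 2 * ((aeval z s).im : ℂ) + ε * (Chebyshev.T ℂ n).eval z = 0 := by
  obtain ⟨B, hBn, hB⟩ := exists_finset_cos_mul_eq_zero n
  obtain ⟨A, hAn, hA⟩ := exists_finset_sin_mul_eq_zero n
  have hbranch := (eventually_all_finset A).mpr fun a ha =>
    eventually_exists_finset_zeros_of_sin_mul_eq_zero hs
      (Real.sin_pos_of_mem_Ioo (hA a ha).1).ne' (hA a ha).2 (hs' a (hA a ha).1 (hA a ha).2)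
  filter_upwards [hbranch] with ε hε
  have hvertex : ∀ b ∈ B, 2 * ((aeval (ellipticPoint b 0) s).im : ℂ) +
      ε * (Chebyshev.T ℂ n).eval (ellipticPoint b 0) = 0 := by
    intro b hb
    rw [im_aeval_ellipticPoint_zero, eval_T_ellipticPoint, mul_zero, ellipticPoint_zero,
      (hB b hb).2]
    simp
  obtain ⟨S, hS_card, hS⟩ := exists_finset_card_eq_of_ellipticPoint_mem
    (Z := {z | 2 * ((aeval z s).im : ℂ) + ε * (Chebyshev.T ℂ n).eval z = 0})
    (fun a ha => (hA a ha).1) (fun b hb => (hB b hb).1) hvertex hε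
  exact ⟨S, by omega, hS⟩

end HarmonicZeros

/-- Theorem 2: for all `n > m ≥ 1` there is a harmonic polynomial
`h = p + conj ∘ q` with `deg p = n`, `deg q = m`, having at least `3n - 2` zeros. -/
theorem exists_harmonic_with_3n_sub_2_zeros
    (n m : ℕ) (hm : 1 ≤ m) (hmn : m < n) :
    ∃ p q : Polynomial ℂ, p.natDegree = n ∧ q.natDegree = m ∧
      ∃ S : Finset ℂ, 3 * n - 2 ≤ S.card ∧
        ∀ z ∈ S, p.eval z + (starRingEnd ℂ) (q.eval z) = 0 := by
  have hs_natDegree : ((X + 1 : ℝ[X]) ^ m).natDegree = m := by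
    rw [natDegree_pow, ← C_1, natDegree_X_add_C, mul_one]
  have hs_degree : ((X + 1 : ℝ[X]) ^ m).degree < n :=
    degree_le_natDegree.trans_lt (by exact_mod_cast hs_natDegree.trans_lt hmn)
  obtain ⟨ε, ⟨S, hS_card, hS⟩, hε⟩ :=
    ((eventually_exists_finset_zeros hs_degree fun a ha _ =>
      derivative_X_add_one_pow_eval_cos_ne_zero (by omega) ha).and self_mem_nhdsWithin).exists
  set s : ℂ[X] := ((X + 1 : ℝ[X]) ^ m).map (algebraMap ℝ ℂ) with hs
  have hεI : (ε * Complex.I : ℂ) ≠ 0 :=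
    mul_ne_zero (by exact_mod_cast (Set.mem_Ioi.mp hε).ne') Complex.I_ne_zero
  refine ⟨s + C (ε * Complex.I) * Chebyshev.T ℂ n, -s, ?_, ?_, S, hS_card.ge, fun z hz => ?_⟩
  · exact natDegree_add_C_mul_T ((degree_map _ _).trans_lt hs_degree) hεI
  · rw [natDegree_neg, natDegree_map, hs_natDegree]
  · rw [eval_add_conj_eval_neg, hs, eval_map_algebraMap, hS z hz, mul_zero]
end

section
/- For all integers n and m with 1 ≤ m < n, there exist polynomials p, q with complex coefficients, of degrees n and m respectively, such that the zero set {z ∈ ℂ : p(z) + conj(q(z)) = 0} has at least m² + m + n elements. -/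
open Polynomial

/-!
For small `s > 0` the zeros of
`s * z ^ n + (z ^ m - (z - a) ^ m) / 2 + conj ((z ^ m + (z - a) ^ m) / 2)` are found at two scales.

At `s = 0` the function is `Re (z ^ m) - i * Im ((z - a) ^ m)`, whose zeros are the intersections of
a pencil of `m` lines through `0` with a pencil of `m` lines through `a`. For generic `a` these are
`m ^ 2` points, all nondegenerate.

Put `s = t ^ (n - m)`. In the coordinate `w = t * z`, and after multiplication by `t ^ m`, the
function has the same shape with `s` replaced by `1` and `a` by `t * a`. Its limit as `t → 0` is
`w ^ n + conj (w ^ m)`, which has nondegenerate zeros at the `m + n` solutions of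
`w ^ (m + n) = -1`.

By the implicit function theorem both families of zeros persist for small `t > 0`. The first stays
bounded, while the second escapes to infinity like `1 / t`, so the two families are disjoint.
-/

open Filter Topology
open scoped ComplexConjugate

/-! ### Persistence of nondegenerate zeros -/

section Persistence

variable {𝕜 : Type*} [NontriviallyNormedField 𝕜]
  {P : Type*} [NormedAddCommGroup P] [NormedSpace 𝕜 P] [CompleteSpace P]
  {E : Type*} [NormedAddCommGroup E] [NormedSpace 𝕜 E]
  {F : Type*} [NormedAddCommGroup F] [NormedSpace 𝕜 F]

variable (𝕜) in
/-- A zero of `f` at which the derivative over `𝕜` is invertible, so that the implicit function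
theorem applies. No differentiability is required separately: where `f` is not differentiable,
`fderiv` is `0`, which is invertible only between trivial spaces. -/
def IsNondegenerateZero (f : E → F) (z : E) : Prop :=
  f z = 0 ∧ (fderiv 𝕜 f z).IsInvertible

variable [CompleteSpace E] [CompleteSpace F]

theorem IsNondegenerateZero.exists_tendsto {f : P × E → F} {f' : P × E →L[𝕜] F} {p₀ : P} {z : E}
    (hz : IsNondegenerateZero 𝕜 (fun x => f (p₀, x)) z) (hf : HasStrictFDerivAt f f' (p₀, z)) :
    ∃ ψ : P → E, Tendsto ψ (𝓝 p₀) (𝓝 z) ∧ ∀ᶠ p in 𝓝 p₀, f (p, ψ p) = 0 := by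
  obtain ⟨hz₀, hinv⟩ := hz
  have hpartial : fderiv 𝕜 (fun x => f (p₀, x)) z = f' ∘L .inr 𝕜 P E :=
    (hf.hasFDerivAt.comp z (hasFDerivAt_prodMk_right p₀ z)).fderiv
  rw [hpartial] at hinv
  refine ⟨hf.implicitFunctionOfProdDomain hinv, hf.tendsto_implicitFunctionOfProdDomain hinv, ?_⟩
  filter_upwards [hf.eventually_apply_implicitFunctionOfProdDomain hinv] with p hp
  exact hp.trans hz₀

theorem eventually_exists_finset_zeros_s2 {f : P × E → F} {p₀ : P} {S : Finset E} {K : Set E}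
    (hK : IsOpen K) (hSK : ↑S ⊆ K)
    (hf : ∀ z ∈ S, ∃ f' : P × E →L[𝕜] F, HasStrictFDerivAt f f' (p₀, z))
    (hS : ∀ z ∈ S, IsNondegenerateZero 𝕜 (fun x => f (p₀, x)) z) :
    ∀ᶠ p in 𝓝 p₀, ∃ T : Finset E, T.card = S.card ∧ ∀ w ∈ T, w ∈ K ∧ f (p, w) = 0 := by
  classical
  have hbranch : ∀ z ∈ S, ∃ ψ : P → E,
      Tendsto ψ (𝓝 p₀) (𝓝 z) ∧ ∀ᶠ p in 𝓝 p₀, f (p, ψ p) = 0 := fun z hz =>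
    (hS z hz).exists_tendsto (hf z hz).choose_spec
  choose! ψ hlim hzero using hbranch
  have hmem : ∀ᶠ p in 𝓝 p₀, ∀ z ∈ S, ψ z p ∈ K ∧ f (p, ψ z p) = 0 :=
    (eventually_all_finset S).2 fun z hz =>
      ((hlim z hz).eventually (hK.mem_nhds (hSK hz))).and (hzero z hz)
  have hinj : ∀ᶠ p in 𝓝 p₀, ∀ x ∈ S, ∀ y ∈ S, x ≠ y → ψ x p ≠ ψ y p :=
    (eventually_all_finset S).2 fun x hx => (eventually_all_finset S).2 fun y hy =>
      eventually_imp_distrib_left.2 fun hxy =>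
        ((hlim x hx).prodMk_nhds (hlim y hy)).eventually
          ((isOpen_ne_fun continuous_fst continuous_snd).mem_nhds hxy)
  filter_upwards [hmem, hinj] with p hp hinj
  refine ⟨S.image (ψ · p), Finset.card_image_of_injOn ?_, Finset.forall_mem_image.2 hp⟩
  intro x hx y hy
  exact not_imp_not.1 (hinj x hx y hy)

end Persistence

/-- The real derivative of `f + conj g` has determinant `‖f'‖ ^ 2 - ‖g'‖ ^ 2`. -/
theorem isNondegenerateZero_add_conj {f g : ℂ → ℂ} {f' g' z : ℂ} (hf : HasDerivAt f f' z)
    (hg : HasDerivAt g g' z) (h₀ : f z + conj (g z) = 0) (hne : ‖f'‖ ≠ ‖g'‖) :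
    IsNondegenerateZero ℝ (fun w => f w + conj (g w)) z := by
  let L : ℂ →L[ℝ] ℂ := f' • 1 + Complex.conjCLE.toContinuousLinearMap ∘L (g' • 1)
  have hL : HasFDerivAt (fun w => f w + conj (g w)) L z := hf.complexToReal_fderiv.add
    (Complex.conjCLE.hasFDerivAt.comp z hg.complexToReal_fderiv)
  have hinj : Function.Injective L := by
    refine (injective_iff_map_eq_zero L).2 fun v hv => ?_
    have hv' : v * f' = -conj (v * g') := eq_neg_of_add_eq_zero_left (by
      simpa [L, mul_comm] using hv)
    have hnorm : ‖v‖ * ‖f'‖ = ‖v‖ * ‖g'‖ := by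
      simpa only [norm_neg, RCLike.norm_conj, norm_mul] using congrArg norm hv'
    by_contra hv₀
    exact hne (mul_left_cancel₀ (norm_ne_zero_iff.2 hv₀) hnorm)
  refine ⟨h₀, ?_⟩
  rw [hL.fderiv]
  exact ⟨(LinearEquiv.ofInjectiveEndo L.toLinearMap hinj).toContinuousLinearEquiv, rfl⟩

/-! ### The family of harmonic polynomials -/

/-- The harmonic polynomials among which the example is found: `s` is the perturbation parameter
creating the zeros near infinity, and `a` is the centre of the second pencil of lines. -/
noncomputable def harmonicFamily (n m : ℕ) (s a z : ℂ) : ℂ :=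
  s * z ^ n + (z ^ m - (z - a) ^ m) / 2 + conj ((z ^ m + (z - a) ^ m) / 2)

theorem contDiff_harmonicFamily (n m : ℕ) {k : WithTop ℕ∞} :
    ContDiff ℝ k fun x : (ℂ × ℂ) × ℂ => harmonicFamily n m x.1.1 x.1.2 x.2 := by
  unfold harmonicFamily
  refine ContDiff.add (by fun_prop) (Complex.conjCLE.contDiff.comp ?_)
  fun_prop

theorem harmonicFamily_mul_mul {n m : ℕ} (hmn : m ≤ n) (s a z : ℂ) (t : ℝ) :
    harmonicFamily n m s (t * a) (t * z) = t ^ m * harmonicFamily n m (s * t ^ (n - m)) a z := by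
  have hpow : (t : ℂ) ^ n = t ^ m * t ^ (n - m) := by rw [← pow_add, Nat.add_sub_cancel' hmn]
  simp only [harmonicFamily, ← mul_sub, mul_pow, ← mul_add, mul_div_assoc, map_mul, map_pow,
    Complex.conj_ofReal, hpow]
  ring

theorem harmonicFamily_div_eq_zero {n m : ℕ} (hmn : m ≤ n) {s a w : ℂ} {t : ℝ} (ht : t ≠ 0)
    (hw : harmonicFamily n m s (t * a) w = 0) :
    harmonicFamily n m (s * t ^ (n - m)) a (w / t) = 0 := by
  have htC : (t : ℂ) ≠ 0 := Complex.ofReal_ne_zero.2 ht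
  have hscale := harmonicFamily_mul_mul hmn s a (w / t) t
  rw [mul_div_cancel₀ _ htC, hw] at hscale
  exact (mul_eq_zero.1 hscale.symm).resolve_left (pow_ne_zero m htC)

theorem natDegree_add_eq_of_monic {R : Type*} [Semiring R] {p q : R[X]} (hp : p.Monic)
    (hq : q.Monic) (hpq : p.natDegree = q.natDegree) (h2 : (2 : R) ≠ 0) :
    (p + q).natDegree = q.natDegree := by
  have : Nontrivial R := nontrivial_of_ne 2 0 h2
  have hlead : p.leadingCoeff + q.leadingCoeff ≠ 0 := by
    rwa [hp.leadingCoeff, hq.leadingCoeff, one_add_one_eq_two]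
  have hdeg : p.degree = q.degree := by
    rw [degree_eq_natDegree hp.ne_zero, degree_eq_natDegree hq.ne_zero, hpq]
  apply natDegree_eq_of_degree_eq
  rw [degree_add_eq_of_leadingCoeff_add_ne_zero hlead, hdeg, max_self]

theorem exists_polynomials_eval_eq_harmonicFamily {n m : ℕ} (hmn : m < n) {s : ℂ} (hs : s ≠ 0)
    (a : ℂ) :
    ∃ p q : ℂ[X], p.natDegree = n ∧ q.natDegree = m ∧
      ∀ z, p.eval z + conj (q.eval z) = harmonicFamily n m s a z := by
  have hdeg : ((X - C a) ^ m).natDegree = m := by simp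
  refine ⟨C s * X ^ n + C 2⁻¹ * (X ^ m - (X - C a) ^ m), C 2⁻¹ * (X ^ m + (X - C a) ^ m),
    ?_, ?_, fun z => ?_⟩
  · rw [natDegree_add_eq_left_of_natDegree_lt] <;> rw [natDegree_C_mul_X_pow n s hs]
    calc (C 2⁻¹ * (X ^ m - (X - C a) ^ m)).natDegree
        ≤ max (X ^ m : ℂ[X]).natDegree ((X - C a) ^ m).natDegree :=
          (natDegree_C_mul_le _ _).trans (natDegree_sub_le _ _)
      _ < n := by simpa [hdeg] using hmn
  · rw [natDegree_C_mul (by norm_num), natDegree_add_eq_of_monic (monic_X_pow m)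
      ((monic_X_sub_C a).pow m) (by simp) two_ne_zero, hdeg]
  · simp only [harmonicFamily, eval_add, eval_sub, eval_mul, eval_pow, eval_C, eval_X,
      div_eq_inv_mul]

/-! ### Zeros at finite distance -/

theorem card_nthRootsFinset_of_isAlgClosed {K : Type*} [Field K] [IsAlgClosed K] {k : ℕ}
    (hk : (k : K) ≠ 0) {b : K} (hb : b ≠ 0) : (nthRootsFinset k b).card = k := by
  classical
  rw [nthRootsFinset_def, nthRoots,
    Multiset.toFinset_card_of_nodup (nodup_roots (separable_X_pow_sub_C b hk hb)),
    IsAlgClosed.card_roots_eq_natDegree, natDegree_X_pow_sub_C]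

/-- The common point of the lines `z = α * conj z` through `0` and `z - a = β * conj (z - a)`
through `a`, for distinct `α` and `β` on the unit circle. -/
noncomputable def lineIntersection (a α β : ℂ) : ℂ :=
  α * (a - β * conj a) / (α - β)

theorem lineIntersection_eq_mul_conj {α β : ℂ} (hα : ‖α‖ = 1) (hβ : ‖β‖ = 1) (hne : α ≠ β)
    (a : ℂ) : lineIntersection a α β = α * conj (lineIntersection a α β) := by
  have hα₀ : α ≠ 0 := norm_ne_zero_iff.1 (by simp [hα])
  have hβ₀ : β ≠ 0 := norm_ne_zero_iff.1 (by simp [hβ])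
  have hconj : conj (lineIntersection a α β) = (a - β * conj a) / (α - β) := by
    simp only [lineIntersection, map_div₀, map_mul, map_sub, Complex.conj_conj,
      ← Complex.inv_eq_conj hα, ← Complex.inv_eq_conj hβ]
    rw [inv_sub_inv hα₀ hβ₀]
    have := sub_ne_zero.2 hne
    have := sub_ne_zero.2 hne.symm
    field_simp
    ring
  rw [hconj, lineIntersection, mul_div_assoc]

theorem lineIntersection_sub {α β : ℂ} (hne : α ≠ β) (a : ℂ) :
    lineIntersection a α β - a = lineIntersection (-a) β α := by
  have := sub_ne_zero.2 hne
  have := sub_ne_zero.2 hne.symm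
  simp only [lineIntersection, map_neg]
  field_simp
  ring

theorem lineIntersection_sub_eq_mul_conj {α β : ℂ} (hα : ‖α‖ = 1) (hβ : ‖β‖ = 1) (hne : α ≠ β)
    (a : ℂ) : lineIntersection a α β - a = β * conj (lineIntersection a α β - a) := by
  rw [lineIntersection_sub hne]
  exact lineIntersection_eq_mul_conj hβ hα hne.symm (-a)

theorem conj_eq_neg_iff_re {z : ℂ} : conj z = -z ↔ z.re = 0 := by
  simp [Complex.ext_iff, eq_neg_iff_add_eq_zero]

theorem re_pow_eq_zero_of_eq_mul_conj {m : ℕ} {α z : ℂ} (hα : α ^ m = -1) (hz : z = α * conj z) :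
    (z ^ m).re = 0 := by
  have hpow : z ^ m = -conj (z ^ m) := by
    conv_lhs => rw [hz, mul_pow, hα, neg_one_mul, ← map_pow]
  exact conj_eq_neg_iff_re.1 (neg_eq_iff_eq_neg.2 hpow).symm

theorem im_pow_eq_zero_of_eq_mul_conj {m : ℕ} {β z : ℂ} (hβ : β ^ m = 1) (hz : z = β * conj z) :
    (z ^ m).im = 0 := by
  have hpow : z ^ m = conj (z ^ m) := by
    conv_lhs => rw [hz, mul_pow, hβ, one_mul, ← map_pow]
  exact Complex.conj_eq_iff_im.1 hpow.symm

theorem ne_zero_of_im_sub_pow_eq_zero {m : ℕ} {a z : ℂ} (ha : (a ^ m).im ≠ 0)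
    (hz : ((z - a) ^ m).im = 0) : z ≠ 0 := by
  rintro rfl
  rw [zero_sub, neg_pow] at hz
  obtain h | h := neg_one_pow_eq_or ℂ m <;> simp [h, ha] at hz

theorem exists_finset_re_pow_im_sub_pow_eq_zero {m : ℕ} (hm : m ≠ 0) {a : ℂ}
    (hre : (a ^ m).re ≠ 0) (him : (a ^ m).im ≠ 0) :
    ∃ S : Finset ℂ, S.card = m ^ 2 ∧ ∀ z ∈ S, (z ^ m).re = 0 ∧ ((z - a) ^ m).im = 0 := by
  classical
  let A := nthRootsFinset m (-1 : ℂ) ×ˢ nthRootsFinset m (1 : ℂ)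
  have hA : ∀ x ∈ A, x.1 ^ m = -1 ∧ x.2 ^ m = 1 := fun x hx => by
    simpa [A, mem_nthRootsFinset (Nat.pos_of_ne_zero hm)] using hx
  let Z : ℂ × ℂ → ℂ := fun x => lineIntersection a x.1 x.2
  have hlines : ∀ x ∈ A, Z x = x.1 * conj (Z x) ∧ Z x - a = x.2 * conj (Z x - a) := by
    rintro ⟨α, β⟩ hx
    obtain ⟨hα, hβ⟩ := hA _ hx
    have hα₁ : ‖α‖ = 1 := (pow_eq_one_iff_of_nonneg (norm_nonneg α) hm).1 (by simp [← norm_pow, hα])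
    have hβ₁ : ‖β‖ = 1 := Complex.norm_eq_one_of_pow_eq_one hβ hm
    have hne : α ≠ β := by
      rintro rfl
      norm_num [hα] at hβ
    exact ⟨lineIntersection_eq_mul_conj hα₁ hβ₁ hne a,
      lineIntersection_sub_eq_mul_conj hα₁ hβ₁ hne a⟩
  have hzero : ∀ x ∈ A, (Z x ^ m).re = 0 ∧ ((Z x - a) ^ m).im = 0 := fun x hx =>
    ⟨re_pow_eq_zero_of_eq_mul_conj (hA x hx).1 (hlines x hx).1,
      im_pow_eq_zero_of_eq_mul_conj (hA x hx).2 (hlines x hx).2⟩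
  refine ⟨A.image Z, ?_, Finset.forall_mem_image.2 hzero⟩
  rw [Finset.card_image_of_injOn, Finset.card_product,
    card_nthRootsFinset_of_isAlgClosed (by simpa) (by simp),
    card_nthRootsFinset_of_isAlgClosed (by simpa) one_ne_zero, sq]
  intro x hx y hy hxy
  obtain ⟨hx₁, hx₂⟩ := hlines x hx
  obtain ⟨hy₁, hy₂⟩ := hlines y hy
  have hZ : conj (Z x) ≠ 0 :=
    (_root_.map_ne_zero _).2 (ne_zero_of_im_sub_pow_eq_zero him (hzero x hx).2)
  have hZa : conj (Z x - a) ≠ 0 :=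
    (_root_.map_ne_zero _).2 (sub_ne_zero.2 fun h => hre (h ▸ (hzero x hx).1))
  rw [← hxy] at hy₁ hy₂
  exact Prod.ext (mul_right_cancel₀ hZ (hx₁.symm.trans hy₁))
    (mul_right_cancel₀ hZa (hx₂.symm.trans hy₂))

theorem harmonicFamily_zero_left (n m : ℕ) (a z : ℂ) :
    harmonicFamily n m 0 a z = (z ^ m).re - ((z - a) ^ m).im * Complex.I := by
  rw [Complex.re_eq_add_conj, Complex.im_eq_sub_conj]
  simp only [harmonicFamily, map_div₀, map_add, Complex.conj_ofNat]
  field_simp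
  ring

theorem re_mul_conj_eq_zero_of_norm_sub_eq_norm_add {u v : ℂ} (h : ‖u - v‖ = ‖u + v‖) :
    (u * conj v).re = 0 := by
  have hsq : Complex.normSq (u - v) = Complex.normSq (u + v) := by
    rw [Complex.normSq_eq_norm_sq, Complex.normSq_eq_norm_sq, h]
  rw [Complex.normSq_sub, Complex.normSq_add] at hsq
  linarith

theorem norm_pow_sub_pow_ne_norm_pow_add_pow {k : ℕ} {a z : ℂ}
    (hre : (a ^ (k + 1)).re ≠ 0) (him : (a ^ (k + 1)).im ≠ 0)
    (hz : (z ^ (k + 1)).re = 0) (hza : ((z - a) ^ (k + 1)).im = 0) :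
    ‖z ^ k - (z - a) ^ k‖ ≠ ‖z ^ k + (z - a) ^ k‖ := by
  intro hnorm
  have hz₀ : z ≠ 0 := ne_zero_of_im_sub_pow_eq_zero him hza
  have hza₀ : z - a ≠ 0 := sub_ne_zero.2 fun h => hre (h ▸ hz)
  have hzc := conj_eq_neg_iff_re.2 hz
  have hzac := Complex.conj_eq_iff_im.2 hza
  have horth := conj_eq_neg_iff_re.2 (re_mul_conj_eq_zero_of_norm_sub_eq_norm_add hnorm)
  -- `z ^ k` and `(z - a) ^ k` are orthogonal, while `z * z ^ k` is imaginary and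
  -- `(z - a) * (z - a) ^ k` is real, so `z - a` is a real multiple of `z`.
  have hcollinear : z * conj a = conj z * a := by
    simp only [map_mul, map_pow, map_sub, Complex.conj_conj] at horth hzc hzac
    have : z ^ (k + 1) * (z - a) ^ (k + 1) * (z * conj a - conj z * a) = 0 := by
      linear_combination (z * conj z * (z - a) * (conj z - conj a)) * horth
        - ((z - a) ^ (k + 1) * z * (conj z - conj a)) * hzc
        - (z ^ (k + 1) * conj z * (z - a)) * hzac
    exact sub_eq_zero.1 ((mul_eq_zero.1 this).resolve_left
      (mul_ne_zero (pow_ne_zero _ hz₀) (pow_ne_zero _ hza₀)))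
  have hpow : z ^ (k + 1) * conj (a ^ (k + 1)) = conj (z ^ (k + 1)) * a ^ (k + 1) := by
    rw [map_pow, map_pow, ← mul_pow, ← mul_pow, hcollinear]
  rw [hzc, neg_mul, ← mul_neg] at hpow
  exact hre (conj_eq_neg_iff_re.1 (mul_left_cancel₀ (pow_ne_zero _ hz₀) hpow))

theorem isNondegenerateZero_harmonicFamily_zero_left (n : ℕ) {m : ℕ} (hm : m ≠ 0) {a z : ℂ}
    (hre : (a ^ m).re ≠ 0) (him : (a ^ m).im ≠ 0)
    (hz : (z ^ m).re = 0) (hza : ((z - a) ^ m).im = 0) :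
    IsNondegenerateZero ℝ (harmonicFamily n m 0 a) z := by
  obtain ⟨k, rfl⟩ := Nat.exists_eq_succ_of_ne_zero hm
  have hzero : harmonicFamily n (k + 1) 0 a z = 0 := by simp [harmonicFamily_zero_left, hz, hza]
  have hpow : HasDerivAt (fun w => w ^ (k + 1)) ((k + 1) * z ^ k) z := by
    simpa using hasDerivAt_pow (k + 1) z
  have hpow' : HasDerivAt (fun w => (w - a) ^ (k + 1)) ((k + 1) * (z - a) ^ k) z := by
    simpa using ((hasDerivAt_id z).sub_const a).fun_pow (k + 1)
  have hnorm : ‖((k + 1) * z ^ k - (k + 1) * (z - a) ^ k) / 2‖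
      ≠ ‖((k + 1) * z ^ k + (k + 1) * (z - a) ^ k) / 2‖ := by
    have hk : ‖(k + 1 : ℂ)‖ ≠ 0 := norm_ne_zero_iff.2 (Nat.cast_add_one_ne_zero k)
    rw [← mul_sub, ← mul_add, norm_div, norm_div, norm_mul, norm_mul]
    intro h
    exact norm_pow_sub_pow_ne_norm_pow_add_pow hre him hz hza (by simpa [hk] using h)
  simp only [harmonicFamily, zero_mul, zero_add] at hzero
  have := isNondegenerateZero_add_conj ((hpow.sub hpow').div_const 2)
    ((hpow.add hpow').div_const 2) hzero hnorm
  convert this using 2 with w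
  simp [harmonicFamily]

/-! ### Zeros near infinity -/

theorem harmonicFamily_one_zero (n m : ℕ) (z : ℂ) :
    harmonicFamily n m 1 0 z = z ^ n + conj (z ^ m) := by
  simp [harmonicFamily]

theorem isNondegenerateZero_harmonicFamily_one_zero {n m : ℕ} (hmn : m ≠ n) {z : ℂ}
    (hz : z ^ (m + n) = -1) : IsNondegenerateZero ℝ (harmonicFamily n m 1 0) z := by
  have hmn₀ : m + n ≠ 0 := by omega
  have hnorm : ‖z‖ = 1 :=
    (pow_eq_one_iff_of_nonneg (norm_nonneg z) hmn₀).1 (by rw [← norm_pow, hz]; simp)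
  have hunit : z ^ m * conj (z ^ m) = 1 := by
    rw [Complex.mul_conj', norm_pow, hnorm]
    simp
  have hzero : z ^ n + conj (z ^ m) = 0 := by
    rw [pow_add] at hz
    linear_combination conj (z ^ m) * hz - z ^ n * hunit
  have hderiv : ‖(n : ℂ) * z ^ (n - 1)‖ ≠ ‖(m : ℂ) * z ^ (m - 1)‖ := by
    simpa [hnorm] using hmn.symm
  rw [funext (harmonicFamily_one_zero n m)]
  exact isNondegenerateZero_add_conj (hasDerivAt_pow n z) (hasDerivAt_pow m z) hzero hderiv

/-! ### Gluing the two scales -/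

theorem eventually_exists_finset_harmonicFamily_zeros (n m : ℕ) {s₀ a₀ : ℂ} {S : Finset ℂ}
    {K : Set ℂ} (hK : IsOpen K) (hSK : ↑S ⊆ K)
    (hS : ∀ z ∈ S, IsNondegenerateZero ℝ (harmonicFamily n m s₀ a₀) z) :
    ∀ᶠ p in 𝓝 (s₀, a₀), ∃ T : Finset ℂ, T.card = S.card ∧
      ∀ w ∈ T, w ∈ K ∧ harmonicFamily n m p.1 p.2 w = 0 :=
  eventually_exists_finset_zeros_s2 hK hSK
    (fun _ _ => ⟨_, (contDiff_harmonicFamily n m).contDiffAt.hasStrictFDerivAt one_ne_zero⟩) hS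

theorem disjoint_image_div [DecidableEq ℂ] {T₀ T₁ : Finset ℂ} {t R r : ℝ} (ht : 0 < t)
    (htR : t * R < r) (hT₀ : ∀ z ∈ T₀, ‖z‖ < R) (hT₁ : ∀ w ∈ T₁, r < ‖w‖) :
    Disjoint T₀ (T₁.image (· / (t : ℂ))) := by
  refine Finset.disjoint_left.2 fun z hz hz' => ?_
  obtain ⟨w, hw, rfl⟩ := Finset.mem_image.1 hz'
  have hlt : ‖w‖ < t * R := by
    simpa only [norm_div, Complex.norm_of_nonneg ht.le, div_lt_iff₀' ht] using hT₀ _ hz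
  exact (hT₁ w hw).not_gt (hlt.trans htR)

theorem exists_finset_harmonicFamily_zeros {n m : ℕ} (hmn : m < n) {a : ℂ} {S₀ S₁ : Finset ℂ}
    (h₀ : ∀ z ∈ S₀, IsNondegenerateZero ℝ (harmonicFamily n m 0 a) z)
    (h₁ : ∀ w ∈ S₁, IsNondegenerateZero ℝ (harmonicFamily n m 1 0) w) (hne : 0 ∉ S₁) :
    ∃ s ≠ 0, ∃ T : Finset ℂ, T.card = S₀.card + S₁.card ∧
      ∀ z ∈ T, harmonicFamily n m s a z = 0 := by
  classical
  obtain ⟨R, hR⟩ := S₀.finite_toSet.isBounded.subset_ball 0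
  obtain ⟨r, hr, hrS⟩ := Metric.nhds_basis_closedBall.mem_iff.1
    (S₁.finite_toSet.isClosed.isOpen_compl.mem_nhds hne)
  have hlim₀ : Tendsto (fun t : ℝ => ((t : ℂ) ^ (n - m), a)) (𝓝 0) (𝓝 (0, a)) := by
    have : Continuous fun t : ℝ => ((t : ℂ) ^ (n - m), a) := by fun_prop
    simpa [Nat.sub_ne_zero_of_lt hmn] using this.tendsto 0
  have hlim₁ : Tendsto (fun t : ℝ => ((1 : ℂ), t * a)) (𝓝 0) (𝓝 (1, 0)) := by
    have : Continuous fun t : ℝ => ((1 : ℂ), t * a) := by fun_prop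
    simpa using this.tendsto 0
  have hev₀ := hlim₀.eventually
    (eventually_exists_finset_harmonicFamily_zeros n m Metric.isOpen_ball hR h₀)
  have hev₁ := hlim₁.eventually (eventually_exists_finset_harmonicFamily_zeros n m
    Metric.isClosed_closedBall.isOpen_compl (Set.subset_compl_comm.1 hrS) h₁)
  have hsmall : ∀ᶠ t : ℝ in 𝓝 0, t * R < r := by
    have : Continuous fun t : ℝ => t * R := by fun_prop
    exact (this.tendsto 0).eventually_lt_const (by simpa)
  obtain ⟨t, ⟨⟨T₀, hT₀, hzero₀⟩, ⟨T₁, hT₁, hzero₁⟩, htR⟩, (ht : 0 < t)⟩ :=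
    (((hev₀.and (hev₁.and hsmall)).filter_mono nhdsWithin_le_nhds).and
      (self_mem_nhdsWithin (s := Set.Ioi 0))).exists
  have htC : (t : ℂ) ≠ 0 := Complex.ofReal_ne_zero.2 ht.ne'
  have hdisj : Disjoint T₀ (T₁.image (· / (t : ℂ))) := disjoint_image_div ht htR
    (fun z hz => mem_ball_zero_iff.1 (hzero₀ z hz).1)
    (fun w hw => not_le.1 (mt mem_closedBall_zero_iff.2 (hzero₁ w hw).1))
  refine ⟨t ^ (n - m), pow_ne_zero _ htC, T₀ ∪ T₁.image (· / (t : ℂ)), ?_, fun z hz => ?_⟩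
  · rw [Finset.card_union_of_disjoint hdisj, hT₀,
      Finset.card_image_of_injective _ (fun _ _ => (div_left_inj' htC).1), hT₁]
  · obtain hz | hz := Finset.mem_union.1 hz
    · exact (hzero₀ z hz).2
    · obtain ⟨w, hw, rfl⟩ := Finset.mem_image.1 hz
      simpa using harmonicFamily_div_eq_zero hmn.le ht.ne' (hzero₁ w hw).2

/-- Theorem 3: for all `n > m ≥ 1` there is a harmonic polynomial
`h = p + conj ∘ q` with `deg p = n`, `deg q = m`, having at least `m² + m + n` zeros. -/
theorem exists_harmonic_with_m_sq_add_m_add_n_zeros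
    (n m : ℕ) (hm : 1 ≤ m) (hmn : m < n) :
    ∃ p q : Polynomial ℂ, p.natDegree = n ∧ q.natDegree = m ∧
      ∃ S : Finset ℂ, m ^ 2 + m + n ≤ S.card ∧
        ∀ z ∈ S, p.eval z + (starRingEnd ℂ) (q.eval z) = 0 := by
  obtain ⟨a, ha⟩ := IsAlgClosed.exists_pow_nat_eq (1 + Complex.I) hm
  have hre : (a ^ m).re ≠ 0 := by simp [ha]
  have him : (a ^ m).im ≠ 0 := by simp [ha]
  have hm₀ : m ≠ 0 := Nat.one_le_iff_ne_zero.1 hm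
  have hmn₀ : m + n ≠ 0 := by omega
  obtain ⟨S₀, hcard₀, hS₀⟩ := exists_finset_re_pow_im_sub_pow_eq_zero hm₀ hre him
  let S₁ := nthRootsFinset (m + n) (-1 : ℂ)
  have hcard₁ : S₁.card = m + n :=
    card_nthRootsFinset_of_isAlgClosed (by exact_mod_cast hmn₀) (by simp)
  have hS₁ : ∀ w ∈ S₁, w ^ (m + n) = -1 := fun w =>
    (mem_nthRootsFinset (Nat.pos_of_ne_zero hmn₀) _).1
  obtain ⟨s, hs, T, hT, hzero⟩ := exists_finset_harmonicFamily_zeros hmn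
    (fun z hz => isNondegenerateZero_harmonicFamily_zero_left n hm₀ hre him
      (hS₀ z hz).1 (hS₀ z hz).2)
    (fun w hw => isNondegenerateZero_harmonicFamily_one_zero hmn.ne (hS₁ w hw))
    (fun h => by simpa [zero_pow hmn₀] using hS₁ 0 h)
  obtain ⟨p, q, hp, hq, heval⟩ := exists_polynomials_eval_eq_harmonicFamily hmn hs a
  exact ⟨p, q, hp, hq, T, by omega, fun z hz => (heval z).trans (hzero z hz)⟩
end

section
/- For every fixed integer a ≥ 1, the limit superior as n → ∞ of Z(n, n − a)/n² equals 1. -/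
/-!
The quotient is squeezed between `(m / n)²` and `1`, where `m = deg q`.

*Upper bound.* On a finite set of zeros of `p + conj q`, the equation and its conjugate express
`z ^ n` and `(conj z) ^ n` through monomials in `z` and `conj z` of smaller total degree. Hence the
`n²` monomials with both exponents below `n` span all functions on the set (Bézout's bound).

*Lower bound.* For `p = z ^ N + (z - 1) ^ N` and `q = z ^ N - (z - 1) ^ N` one has
`p + conj q = 2 Re (z ^ N) + 2 i Im ((z - 1) ^ N)`, which vanishes where one of `N` lines through
`0` meets one of `N` lines through `1`. The `N (N - 1)` such points off the real axis are
nondegenerate zeros, so they survive a small perturbation, which can raise the degrees to any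
`n ≥ N` and `m ≥ N - 1`.
-/

open Polynomial

/-- `Znm n m` is the maximal possible number of zeros of a harmonic polynomial
`p + conj ∘ q` with `deg p = n` and `deg q = m`. -/
noncomputable def Znm (n m : ℕ) : ℕ :=
  sSup {k : ℕ | ∃ p q : Polynomial ℂ, p.natDegree = n ∧ q.natDegree = m ∧
    k = {z : ℂ | p.eval z + (starRingEnd ℂ) (q.eval z) = 0}.ncard}

open Filter Topology ComplexConjugate

/-! ### Bézout's bound -/

section Bezout

/-- The span of the monomials `x ^ i * y ^ j` of total degree less than `n`. -/
def lowDegreeSpan (R : Type*) {A : Type*} [CommSemiring R] [CommSemiring A] [Algebra R A]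
    (x y : A) (n : ℕ) : Submodule R A :=
  Submodule.span R {a | ∃ i j, i + j < n ∧ x ^ i * y ^ j = a}

/-- The span of the monomials `x ^ i * y ^ j` with both exponents less than `n`. -/
def boxSpan (R : Type*) {A : Type*} [CommSemiring R] [CommSemiring A] [Algebra R A]
    (x y : A) (n : ℕ) : Submodule R A :=
  Submodule.span R (Set.range fun k : Fin n × Fin n => x ^ (k.1 : ℕ) * y ^ (k.2 : ℕ))

section CommSemiring

variable {R A : Type*} [CommSemiring R] [CommSemiring A] [Algebra R A] {x y : A} {n : ℕ}

theorem pow_mul_pow_mem_lowDegreeSpan {i j : ℕ} (h : i + j < n) :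
    x ^ i * y ^ j ∈ lowDegreeSpan R x y n :=
  Submodule.subset_span ⟨i, j, h, rfl⟩

theorem lowDegreeSpan_comm : lowDegreeSpan R x y n = lowDegreeSpan R y x n := by
  unfold lowDegreeSpan
  congr 1
  ext a
  constructor <;> rintro ⟨i, j, hij, rfl⟩ <;> exact ⟨j, i, by omega, mul_comm _ _⟩

theorem pow_mul_pow_mem_boxSpan (hx : x ^ n ∈ lowDegreeSpan R x y n)
    (hy : y ^ n ∈ lowDegreeSpan R x y n) (i j : ℕ) : x ^ i * y ^ j ∈ boxSpan R x y n := by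
  induction hd : i + j using Nat.strong_induction_on generalizing i j with
  | _ d ih =>
    have mul_mem (a b : ℕ) (hab : a + b + n = d) {w : A} (hw : w ∈ lowDegreeSpan R x y n) :
        x ^ a * y ^ b * w ∈ boxSpan R x y n := by
      suffices lowDegreeSpan R x y n ≤
          (boxSpan R x y n).comap (LinearMap.mulLeft R (x ^ a * y ^ b)) from this hw
      refine Submodule.span_le.mpr ?_
      rintro _ ⟨k, l, hkl, rfl⟩
      have hmem := ih _ (by omega) (a + k) (b + l) rfl
      rwa [pow_add, pow_add, mul_mul_mul_comm] at hmem
    rcases le_or_gt n i with hi | hi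
    · obtain ⟨a, rfl⟩ := Nat.exists_eq_add_of_le' hi
      have hmem := mul_mem a j (by omega) hx
      rwa [mul_right_comm, ← pow_add] at hmem
    rcases le_or_gt n j with hj | hj
    · obtain ⟨b, rfl⟩ := Nat.exists_eq_add_of_le' hj
      have hmem := mul_mem i b (by omega) hy
      rwa [mul_assoc, ← pow_add] at hmem
    exact Submodule.subset_span ⟨(⟨i, hi⟩, ⟨j, hj⟩), rfl⟩

theorem boxSpan_eq_top (hx : x ^ n ∈ lowDegreeSpan R x y n)
    (hy : y ^ n ∈ lowDegreeSpan R x y n) (hgen : Algebra.adjoin R {x, y} = ⊤) :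
    boxSpan R x y n = ⊤ := by
  rw [eq_top_iff, ← Algebra.top_toSubmodule, ← hgen, Algebra.adjoin_eq_span, Submodule.span_le]
  intro a ha
  obtain ⟨i, j, rfl⟩ := (Submonoid.mem_closure_pair x y a).mp ha
  exact pow_mul_pow_mem_boxSpan hx hy i j

end CommSemiring

variable {K A : Type*} [Field K] [CommRing A] [Algebra K A] {x y : A}

theorem pow_natDegree_mem_lowDegreeSpan {p q : K[X]} (hdeg : q.natDegree < p.natDegree)
    (h : aeval x p + aeval y q = 0) : x ^ p.natDegree ∈ lowDegreeSpan K x y p.natDegree := by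
  have hlead : p.leadingCoeff ≠ 0 :=
    leadingCoeff_ne_zero.mpr (ne_zero_of_natDegree_gt hdeg)
  rw [aeval_eq_sum_range, Finset.sum_range_succ, aeval_eq_sum_range' hdeg] at h
  rw [← Submodule.smul_mem_iff _ hlead, leadingCoeff,
    show p.coeff p.natDegree • x ^ p.natDegree =
      -(∑ i ∈ Finset.range p.natDegree, p.coeff i • x ^ i +
        ∑ j ∈ Finset.range p.natDegree, q.coeff j • y ^ j) by linear_combination h]
  refine neg_mem (add_mem (sum_mem fun i hi => ?_) (sum_mem fun j hj => ?_)) <;>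
    refine Submodule.smul_mem _ _ ?_
  · simpa using pow_mul_pow_mem_lowDegreeSpan (R := K) (x := x) (y := y) (i := i) (j := 0)
      (by simpa using hi)
  · simpa using pow_mul_pow_mem_lowDegreeSpan (R := K) (x := x) (y := y) (i := 0) (j := j)
      (by simpa using hj)

theorem finrank_le_sq_of_adjoin_pair_eq_top {n : ℕ} (hx : x ^ n ∈ lowDegreeSpan K x y n)
    (hy : y ^ n ∈ lowDegreeSpan K x y n) (hgen : Algebra.adjoin K {x, y} = ⊤) :
    Module.finrank K A ≤ n ^ 2 := by
  have hcard := finrank_range_le_card (R := K)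
    fun k : Fin n × Fin n => x ^ (k.1 : ℕ) * y ^ (k.2 : ℕ)
  have htop := boxSpan_eq_top hx hy hgen
  rw [boxSpan] at htop
  rw [Set.finrank, htop, finrank_top] at hcard
  simpa [sq] using hcard

theorem adjoin_coe_finset_eq_top (T : Finset K) :
    Algebra.adjoin K {((↑) : T → K)} = ⊤ := by
  classical
  refine eq_top_iff.mpr fun f _ => ?_
  let L := Lagrange.interpolate Finset.univ ((↑) : T → K) f
  have hL : aeval ((↑) : T → K) L = f := by
    funext z
    rw [aeval_fn_apply, coe_aeval_eq_eval]
    exact Lagrange.eval_interpolate_at_node f Subtype.val_injective.injOn (Finset.mem_univ z)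
  exact hL ▸ aeval_mem_adjoin_singleton K _

end Bezout

/-! ### Zeros of harmonic polynomials -/

/-- The value at `z` of the harmonic polynomial `p + conj ∘ q`. -/
noncomputable def harmonicEval (p q : ℂ[X]) (z : ℂ) : ℂ :=
  p.eval z + conj (q.eval z)

section BezoutHarmonic

variable {p q : ℂ[X]}

theorem card_le_sq_of_harmonicEval_eq_zero (hdeg : q.natDegree < p.natDegree) (T : Finset ℂ)
    (hT : ∀ z ∈ T, harmonicEval p q z = 0) : T.card ≤ p.natDegree ^ 2 := by
  let x : T → ℂ := (↑)
  let y : T → ℂ := fun z => conj (z : ℂ)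
  have aeval_conj (r : ℂ[X]) (z : T) :
      aeval y (r.map (starRingEnd ℂ)) z = conj (r.eval (z : ℂ)) := by
    rw [aeval_fn_apply, coe_aeval_eq_eval, eval_map, eval₂_at_apply]
  have hx : aeval x p + aeval y (q.map (starRingEnd ℂ)) = 0 := by
    funext z
    rw [Pi.add_apply, aeval_conj, aeval_fn_apply]
    exact hT z z.2
  have hy : aeval y (p.map (starRingEnd ℂ)) + aeval x q = 0 := by
    funext z
    rw [Pi.add_apply, aeval_conj, aeval_fn_apply]
    simpa [harmonicEval] using congrArg conj (hT z z.2)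
  have hxmem := pow_natDegree_mem_lowDegreeSpan (by rwa [natDegree_map]) hx
  have hymem := pow_natDegree_mem_lowDegreeSpan (by rwa [natDegree_map]) hy
  rw [natDegree_map, lowDegreeSpan_comm] at hymem
  have hgen : Algebra.adjoin ℂ {x, y} = ⊤ :=
    top_unique ((adjoin_coe_finset_eq_top T).ge.trans (Algebra.adjoin_mono (by simp [x])))
  simpa using finrank_le_sq_of_adjoin_pair_eq_top hxmem hymem hgen

theorem encard_harmonicEval_eq_zero_le (hdeg : q.natDegree < p.natDegree) :
    {z | harmonicEval p q z = 0}.encard ≤ (p.natDegree ^ 2 : ℕ) := by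
  by_contra! hlt
  obtain ⟨T, hT, hcard⟩ := Set.exists_subset_encard_eq (Order.add_one_le_of_lt hlt)
  lift T to Finset ℂ using Set.finite_of_encard_eq_coe hcard
  rw [Set.encard_coe_eq_coe_finsetCard] at hcard
  have hle := card_le_sq_of_harmonicEval_eq_zero hdeg T fun z hz => hT hz
  have : T.card = p.natDegree ^ 2 + 1 := by exact_mod_cast hcard
  omega

theorem ncard_harmonicEval_eq_zero_le (hdeg : q.natDegree < p.natDegree) :
    {z | harmonicEval p q z = 0}.ncard ≤ p.natDegree ^ 2 :=
  (Set.encard_le_coe_iff_finite_ncard_le.mp (encard_harmonicEval_eq_zero_le hdeg)).2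

theorem Znm_le_sq {n m : ℕ} (h : m < n) : Znm n m ≤ n ^ 2 := by
  refine csSup_le' ?_
  rintro _ ⟨p, q, rfl, rfl, rfl⟩
  exact ncard_harmonicEval_eq_zero_le h

theorem card_zeros_le_Znm (hdeg : q.natDegree < p.natDegree) (T : Finset ℂ)
    (hT : ∀ z ∈ T, harmonicEval p q z = 0) : T.card ≤ Znm p.natDegree q.natDegree := by
  have hbdd : BddAbove {k : ℕ | ∃ r s : ℂ[X], r.natDegree = p.natDegree ∧
      s.natDegree = q.natDegree ∧ k = {z : ℂ | r.eval z + conj (s.eval z) = 0}.ncard} := by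
    refine ⟨p.natDegree ^ 2, ?_⟩
    rintro _ ⟨r, s, hr, hs, rfl⟩
    exact hr ▸ ncard_harmonicEval_eq_zero_le (by omega)
  calc T.card = (T : Set ℂ).ncard := (Set.ncard_coe_finset T).symm
    _ ≤ {z | harmonicEval p q z = 0}.ncard := Set.ncard_le_ncard hT
        (Set.finite_of_encard_le_coe (encard_harmonicEval_eq_zero_le hdeg))
    _ ≤ Znm p.natDegree q.natDegree := le_csSup hbdd ⟨p, q, rfl, rfl, rfl⟩

end BezoutHarmonic

/-! ### Persistence of nondegenerate zeros -/

section Persistence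

variable {𝕜 E F : Type*} [NontriviallyNormedField 𝕜] [CompleteSpace 𝕜]
  [NormedAddCommGroup E] [NormedSpace 𝕜 E] [CompleteSpace E]
  [NormedAddCommGroup F] [NormedSpace 𝕜 F] [CompleteSpace F] {f g : E → F}

theorem eventually_exists_mem_add_smul_eq_zero {f' g' : E →L[𝕜] F} {z : E}
    (hf : HasStrictFDerivAt f f' z) (hsurj : Function.Surjective f')
    (hg : HasStrictFDerivAt g g' z) (hz : f z = 0) {U : Set E} (hU : U ∈ 𝓝 z) :
    ∀ᶠ ε in 𝓝 (0 : 𝕜), ∃ w ∈ U, f w + ε • g w = 0 := by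
  -- `(ε, w) ↦ (ε, f w + ε • g w)` is open at `(0, z)`, so it maps `univ ×ˢ U` to a neighbourhood
  -- of `(0, 0)`.
  let Φ : 𝕜 × E → 𝕜 × F := fun x => (x.1, f x.2 + x.1 • g x.2)
  have hΦ := hasStrictFDerivAt_fst (𝕜 := 𝕜) (p := ((0 : 𝕜), z)) |>.prodMk <|
    (hf.comp ((0 : 𝕜), z) hasStrictFDerivAt_snd).add
      (hasStrictFDerivAt_fst.smul (hg.comp ((0 : 𝕜), z) hasStrictFDerivAt_snd))
  have hmap := hΦ.map_nhds_eq_of_surj <| by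
    refine LinearMap.range_eq_top.mpr fun ⟨a, b⟩ => ?_
    obtain ⟨v, hv⟩ := hsurj (b - a • g z)
    exact ⟨(a, v), by simp [hv]⟩
  change map Φ (𝓝 (0, z)) = 𝓝 (Φ (0, z)) at hmap
  have himage : Φ '' (Set.univ ×ˢ U) ∈ 𝓝 ((0 : 𝕜), (0 : F)) := by
    have hΦz : Φ (0, z) = (0, 0) := by simp [Φ, hz]
    rw [← hΦz, ← hmap]
    exact image_mem_map (prod_mem_nhds univ_mem hU)
  have hslice : Tendsto (fun ε : 𝕜 => (ε, (0 : F))) (𝓝 0) (𝓝 (0, 0)) :=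
    (Continuous.prodMk_left (0 : F)).tendsto 0
  filter_upwards [hslice himage]
  rintro ε ⟨⟨δ, w⟩, ⟨-, hw⟩, heq⟩
  obtain ⟨rfl, hzero⟩ := Prod.mk.inj heq
  exact ⟨w, hw, hzero⟩

theorem eventually_exists_finset_add_smul_eq_zero {f' g' : E → E →L[𝕜] F} (S : Finset E)
    (hf : ∀ z ∈ S, HasStrictFDerivAt f (f' z) z) (hsurj : ∀ z ∈ S, Function.Surjective (f' z))
    (hg : ∀ z ∈ S, HasStrictFDerivAt g (g' z) z) (hS : ∀ z ∈ S, f z = 0) :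
    ∀ᶠ ε in 𝓝 (0 : 𝕜), ∃ T : Finset E, T.card = S.card ∧ ∀ w ∈ T, f w + ε • g w = 0 := by
  classical
  obtain ⟨U, hU, hdisj⟩ := S.finite_toSet.t2_separation
  have hev : ∀ᶠ ε in 𝓝 (0 : 𝕜), ∀ z ∈ S, ∃ w ∈ U z, f w + ε • g w = 0 :=
    (eventually_all_finset S).mpr fun z hz => eventually_exists_mem_add_smul_eq_zero (hf z hz)
      (hsurj z hz) (hg z hz) (hS z hz) ((hU z).2.mem_nhds (hU z).1)
  filter_upwards [hev] with ε hε
  choose! w hwU hw using hε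
  have hinj : Set.InjOn w S := fun z hz z' hz' heq => by
    by_contra hne
    exact Set.disjoint_left.mp (hdisj hz hz' hne) (hwU z hz) (heq ▸ hwU z' hz')
  exact ⟨S.image w, Finset.card_image_of_injOn hinj, by simpa using hw⟩

end Persistence

section Perturbation

/-- The real derivative `v ↦ p' z * v + conj (q' z * v)` of `harmonicEval p q` at `z`. -/
noncomputable def harmonicFDeriv (p q : ℂ[X]) (z : ℂ) : ℂ →L[ℝ] ℂ :=
  ContinuousLinearMap.mul ℝ ℂ (p.derivative.eval z) +
    (Complex.conjCLE : ℂ →L[ℝ] ℂ).comp (ContinuousLinearMap.mul ℝ ℂ (q.derivative.eval z))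

theorem hasStrictFDerivAt_harmonicEval (p q : ℂ[X]) (z : ℂ) :
    HasStrictFDerivAt (harmonicEval p q) (harmonicFDeriv p q z) z := by
  have hasStrictFDerivAt_eval (r : ℂ[X]) : HasStrictFDerivAt (fun w => r.eval w)
      (ContinuousLinearMap.mul ℝ ℂ (r.derivative.eval z)) z :=
    ((r.hasStrictDerivAt z).hasStrictFDerivAt.restrictScalars ℝ).congr_fderiv <| by
      ext v; simp [mul_comm]
  exact (hasStrictFDerivAt_eval p).add
    ((Complex.conjCLE : ℂ →L[ℝ] ℂ).hasStrictFDerivAt.comp z (hasStrictFDerivAt_eval q))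

theorem surjective_harmonicFDeriv {p q : ℂ[X]} {z : ℂ}
    (h : ‖p.derivative.eval z‖ ≠ ‖q.derivative.eval z‖) :
    Function.Surjective (harmonicFDeriv p q z) := by
  refine LinearMap.surjective_of_injective (f := (harmonicFDeriv p q z : ℂ →ₗ[ℝ] ℂ)) ?_
  refine (injective_iff_map_eq_zero _).mpr fun v hv => ?_
  by_contra hv0
  have hsum : p.derivative.eval z * v = -conj (q.derivative.eval z * v) :=
    eq_neg_of_add_eq_zero_left hv
  have hnorm := congrArg norm hsum
  rw [norm_neg, Complex.norm_conj, norm_mul, norm_mul] at hnorm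
  exact h (mul_right_cancel₀ (norm_ne_zero_iff.mpr hv0) hnorm)

theorem eventually_cofinite_natDegree_add_C_mul_X_pow {R : Type*} [Ring R] {p : R[X]} {n : ℕ}
    (hp : p.natDegree ≤ n) : ∀ᶠ ε in cofinite, (p + C ε * X ^ n).natDegree = n := by
  filter_upwards [eventually_cofinite_ne (-p.coeff n)] with ε hε
  refine natDegree_eq_of_le_of_coeff_ne_zero
    (natDegree_add_le_of_degree_le hp (natDegree_C_mul_X_pow_le ε n)) ?_
  simpa [add_eq_zero_iff_eq_neg'] using hε

theorem card_nondegenerate_zeros_le_Znm {p q : ℂ[X]} {n m : ℕ} (hmn : m < n)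
    (hp : p.natDegree ≤ n) (hq : q.natDegree ≤ m) (S : Finset ℂ)
    (hS : ∀ z ∈ S, harmonicEval p q z = 0)
    (hnondeg : ∀ z ∈ S, ‖p.derivative.eval z‖ ≠ ‖q.derivative.eval z‖) :
    S.card ≤ Znm n m := by
  have hzeros := eventually_exists_finset_add_smul_eq_zero (𝕜 := ℝ) S
    (fun z _ => hasStrictFDerivAt_harmonicEval p q z)
    (fun z hz => surjective_harmonicFDeriv (hnondeg z hz))
    (fun z _ => hasStrictFDerivAt_harmonicEval (X ^ n) (X ^ m) z) hS
  have natDegree_perturbed {r : ℂ[X]} {k : ℕ} (hr : r.natDegree ≤ k) :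
      ∀ᶠ ε in 𝓝[≠] (0 : ℝ), (r + C (ε : ℂ) * X ^ k).natDegree = k :=
    (Complex.ofReal_injective.tendsto_cofinite.mono_left (nhdsNE_le_cofinite 0)).eventually
      (eventually_cofinite_natDegree_add_C_mul_X_pow hr)
  obtain ⟨ε, ⟨T, hcard, hT⟩, hpε, hqε⟩ := ((hzeros.filter_mono nhdsWithin_le_nhds).and
    ((natDegree_perturbed hp).and (natDegree_perturbed hq))).exists
  have hle := card_zeros_le_Znm (p := p + C (ε : ℂ) * X ^ n) (q := q + C (ε : ℂ) * X ^ m)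
      (by rwa [hpε, hqε]) T fun w hw => by
    rw [← hT w hw]
    simp only [harmonicEval, eval_add, eval_mul, eval_C, eval_pow, eval_X, map_add, map_mul,
      map_pow, Complex.conj_ofReal, Complex.real_smul]
    ring
  rwa [hpε, hqε, hcard] at hle

end Perturbation

/-! ### Wilmshurst's harmonic polynomial -/

section Wilmshurst

/-- The analytic part `z ^ N + (z - 1) ^ N` of Wilmshurst's harmonic polynomial
`2 Re (z ^ N) + 2 i Im ((z - 1) ^ N)`. -/
noncomputable def wilmshurstAnalytic (N : ℕ) : ℂ[X] := X ^ N + (X - 1) ^ N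

/-- The polynomial `z ^ N - (z - 1) ^ N` whose conjugate is the antianalytic part of Wilmshurst's
harmonic polynomial `2 Re (z ^ N) + 2 i Im ((z - 1) ^ N)`. -/
noncomputable def wilmshurstAntianalytic (N : ℕ) : ℂ[X] := X ^ N - (X - 1) ^ N

theorem isMonicOfDegree_X_sub_one_pow (N : ℕ) : IsMonicOfDegree ((X - 1 : ℂ[X]) ^ N) N := by
  simpa using (isMonicOfDegree_X_sub_one (1 : ℂ)).pow N

theorem natDegree_wilmshurstAnalytic_le (N : ℕ) : (wilmshurstAnalytic N).natDegree ≤ N :=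
  natDegree_add_le_of_degree_le (natDegree_X_pow_le N)
    (isMonicOfDegree_X_sub_one_pow N).natDegree_eq.le

theorem natDegree_wilmshurstAntianalytic_lt {N : ℕ} (hN : N ≠ 0) :
    (wilmshurstAntianalytic N).natDegree < N :=
  (isMonicOfDegree_X_pow ℂ N).natDegree_sub_lt hN (isMonicOfDegree_X_sub_one_pow N)

theorem harmonicEval_wilmshurst_eq_zero {N : ℕ} {z : ℂ} (h0 : z ^ N = -conj z ^ N)
    (h1 : (z - 1) ^ N = (conj z - 1) ^ N) :
    harmonicEval (wilmshurstAnalytic N) (wilmshurstAntianalytic N) z = 0 := by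
  simp only [harmonicEval, wilmshurstAnalytic, wilmshurstAntianalytic, eval_add, eval_sub,
    eval_pow, eval_X, eval_one, map_sub, map_pow, map_one]
  linear_combination h0 + h1

theorem eval_derivative_wilmshurstAnalytic (k : ℕ) (z : ℂ) :
    (wilmshurstAnalytic (k + 1)).derivative.eval z = (k + 1) * (z ^ k + (z - 1) ^ k) := by
  simp [wilmshurstAnalytic, derivative_pow, mul_add]

theorem eval_derivative_wilmshurstAntianalytic (k : ℕ) (z : ℂ) :
    (wilmshurstAntianalytic (k + 1)).derivative.eval z = (k + 1) * (z ^ k - (z - 1) ^ k) := by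
  simp [wilmshurstAntianalytic, derivative_pow, mul_sub]

theorem mul_conj_add_conj_mul_eq_zero {a b : ℂ} (h : ‖a + b‖ = ‖a - b‖) :
    a * conj b + conj a * b = 0 := by
  have hsq : (a + b) * conj (a + b) = (a - b) * conj (a - b) := by
    rw [Complex.mul_conj', Complex.mul_conj', h]
  rw [map_add, map_sub] at hsq
  linear_combination hsq / 2

theorem norm_eval_derivative_wilmshurst_ne {N : ℕ} {z : ℂ} (hN : N ≠ 0)
    (h0 : z ^ N = -conj z ^ N) (h1 : (z - 1) ^ N = (conj z - 1) ^ N) (hz : conj z ≠ z) :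
    ‖(wilmshurstAnalytic N).derivative.eval z‖ ≠
      ‖(wilmshurstAntianalytic N).derivative.eval z‖ := by
  have hz0 : conj z ≠ 0 := fun h => hz (by rw [h, (map_eq_zero _).mp h])
  have hz1 : z - 1 ≠ 0 := fun h => hz (by rw [sub_eq_zero.mp h, map_one])
  obtain ⟨k, rfl⟩ := Nat.exists_eq_add_one_of_ne_zero hN
  intro hnorm
  rw [eval_derivative_wilmshurstAnalytic, eval_derivative_wilmshurstAntianalytic, norm_mul,
    norm_mul] at hnorm
  have horth : z ^ k * (conj z - 1) ^ k + conj z ^ k * (z - 1) ^ k = 0 := by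
    simpa only [map_pow, map_sub, map_one] using mul_conj_add_conj_mul_eq_zero
      (mul_left_cancel₀ (norm_ne_zero_iff.mpr (Nat.cast_add_one_ne_zero k)) hnorm)
  -- Multiply `horth` by `z * conj (z - 1)`: here `z ^ N` is imaginary and `(z - 1) ^ N` real.
  have hprod : conj z ^ k * (z - 1) ^ k * (conj z - z) = 0 := by
    linear_combination z * (conj z - 1) * horth - (conj z - 1) ^ (k + 1) * h0 -
      conj z ^ (k + 1) * h1
  exact mul_ne_zero (mul_ne_zero (pow_ne_zero k hz0) (pow_ne_zero k hz1)) (sub_ne_zero.mpr hz) hprod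

/-- The intersection of the line `z = α * conj z` through `0` with the line
`z - 1 = β * conj (z - 1)` through `1`, for distinct `α` and `β` on the unit circle. -/
noncomputable def lineCrossing (α β : ℂ) : ℂ := α * (1 - β) / (α - β)

section LineCrossing

variable {α β : ℂ}

theorem conj_lineCrossing (hα : ‖α‖ = 1) (hβ : ‖β‖ = 1) (hne : α ≠ β) :
    conj (lineCrossing α β) = (1 - β) / (α - β) := by
  have hα0 : α ≠ 0 := norm_ne_zero_iff.mp (by simp [hα])
  have hβ0 : β ≠ 0 := norm_ne_zero_iff.mp (by simp [hβ])
  have hinv : α⁻¹ - β⁻¹ ≠ 0 := sub_ne_zero.mpr (inv_injective.ne hne)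
  simp only [lineCrossing, map_div₀, map_mul, map_sub, map_one, ← Complex.inv_eq_conj hα,
    ← Complex.inv_eq_conj hβ]
  rw [div_eq_div_iff hinv (sub_ne_zero.mpr hne)]
  field_simp
  ring

theorem lineCrossing_eq_mul_conj (hα : ‖α‖ = 1) (hβ : ‖β‖ = 1) (hne : α ≠ β) :
    lineCrossing α β = α * conj (lineCrossing α β) := by
  rw [conj_lineCrossing hα hβ hne, lineCrossing, mul_div_assoc]

theorem lineCrossing_sub_one_eq_mul_conj (hα : ‖α‖ = 1) (hβ : ‖β‖ = 1) (hne : α ≠ β) :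
    lineCrossing α β - 1 = β * (conj (lineCrossing α β) - 1) := by
  have hsub : α - β ≠ 0 := sub_ne_zero.mpr hne
  rw [conj_lineCrossing hα hβ hne, lineCrossing]
  field_simp
  ring

theorem conj_lineCrossing_ne (hα : ‖α‖ = 1) (hβ : ‖β‖ = 1) (hne : α ≠ β) (hα1 : α ≠ 1)
    (hβ1 : β ≠ 1) : conj (lineCrossing α β) ≠ lineCrossing α β := by
  rw [conj_lineCrossing hα hβ hne, lineCrossing, Ne, div_left_inj' (sub_ne_zero.mpr hne)]
  intro h
  exact hα1 (mul_right_cancel₀ (sub_ne_zero.mpr hβ1.symm) (by rw [one_mul, ← h]))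

end LineCrossing

theorem card_nthRootsFinset_of_ne_zero {K : Type*} [Field K] [IsAlgClosed K] {ζ a : K} {N : ℕ}
    (hζ : IsPrimitiveRoot ζ N) (hN : 0 < N) (ha : a ≠ 0) : (nthRootsFinset N a).card = N := by
  classical
  rw [nthRootsFinset_def, Multiset.toFinset_card_of_nodup (hζ.nthRoots_nodup ha),
    hζ.card_nthRoots, if_pos (IsAlgClosed.exists_pow_nat_eq a hN)]

/-- The pairs `(α, β)` with `α ^ N = -1`, `β ^ N = 1` and `β ≠ 1`. They parametrize, through
`lineCrossing`, the zeros of Wilmshurst's harmonic polynomial off the real axis. -/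
noncomputable def crossingParameters (N : ℕ) : Finset (ℂ × ℂ) :=
  nthRootsFinset N (-1) ×ˢ (nthRootsFinset N 1).erase 1

theorem card_crossingParameters {N : ℕ} (hN : 0 < N) :
    (crossingParameters N).card = N * (N - 1) := by
  have hζ := Complex.isPrimitiveRoot_exp N hN.ne'
  rw [crossingParameters, Finset.card_product,
    Finset.card_erase_of_mem ((mem_nthRootsFinset hN 1).mpr (one_pow N)),
    card_nthRootsFinset_of_ne_zero hζ hN (neg_ne_zero.mpr one_ne_zero),
    card_nthRootsFinset_of_ne_zero hζ hN one_ne_zero]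

section CrossingParameters

variable {N : ℕ} {x : ℂ × ℂ}

theorem mem_crossingParameters (hN : 0 < N) :
    x ∈ crossingParameters N ↔ x.1 ^ N = -1 ∧ x.2 ≠ 1 ∧ x.2 ^ N = 1 := by
  simp only [crossingParameters, Finset.mem_product, Finset.mem_erase, mem_nthRootsFinset hN]

theorem norm_eq_one_of_mem_crossingParameters (hN : 0 < N) (hx : x ∈ crossingParameters N) :
    ‖x.1‖ = 1 ∧ ‖x.2‖ = 1 := by
  obtain ⟨hα, -, hβ⟩ := (mem_crossingParameters hN).mp hx
  refine ⟨(pow_eq_one_iff_of_nonneg (norm_nonneg _) hN.ne').mp ?_,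
    Complex.norm_eq_one_of_pow_eq_one hβ hN.ne'⟩
  rw [← norm_pow, hα, norm_neg, norm_one]

theorem ne_of_mem_crossingParameters (hN : 0 < N) (hx : x ∈ crossingParameters N) :
    x.1 ≠ x.2 ∧ x.1 ≠ 1 := by
  obtain ⟨hα, -, hβ⟩ := (mem_crossingParameters hN).mp hx
  have hpow : x.1 ^ N ≠ 1 := by rw [hα]; norm_num
  exact ⟨fun h => hpow (h ▸ hβ), fun h => hpow (by rw [h, one_pow])⟩

end CrossingParameters

/-- The zeros of Wilmshurst's harmonic polynomial off the real axis. -/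
noncomputable def wilmshurstZeros (N : ℕ) : Finset ℂ :=
  (crossingParameters N).image fun x => lineCrossing x.1 x.2

theorem card_wilmshurstZeros {N : ℕ} (hN : 0 < N) :
    (wilmshurstZeros N).card = N * (N - 1) := by
  rw [wilmshurstZeros, Finset.card_image_of_injOn, card_crossingParameters hN]
  rintro x hx y hy (hxy : lineCrossing x.1 x.2 = lineCrossing y.1 y.2)
  obtain ⟨hxα, hxβ⟩ := norm_eq_one_of_mem_crossingParameters hN hx
  obtain ⟨hyα, hyβ⟩ := norm_eq_one_of_mem_crossingParameters hN hy
  obtain ⟨hxne, hxα1⟩ := ne_of_mem_crossingParameters hN hx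
  obtain ⟨hyne, -⟩ := ne_of_mem_crossingParameters hN hy
  have hreal := conj_lineCrossing_ne hxα hxβ hxne hxα1 ((mem_crossingParameters hN).mp hx).2.1
  have hx0 := lineCrossing_eq_mul_conj hxα hxβ hxne
  have hx1 := lineCrossing_sub_one_eq_mul_conj hxα hxβ hxne
  have hy0 := lineCrossing_eq_mul_conj hyα hyβ hyne
  have hy1 := lineCrossing_sub_one_eq_mul_conj hyα hyβ hyne
  rw [← hxy] at hy0 hy1
  have hconj0 : conj (lineCrossing x.1 x.2) ≠ 0 := fun h => hreal <| by
    rw [h, (map_eq_zero _).mp h]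
  have hconj1 : conj (lineCrossing x.1 x.2) - 1 ≠ 0 := fun h => hreal <| by
    rw [h, mul_zero, sub_eq_zero] at hx1
    rw [hx1, map_one]
  exact Prod.ext (mul_right_cancel₀ hconj0 (hx0.symm.trans hy0))
    (mul_right_cancel₀ hconj1 (hx1.symm.trans hy1))

theorem pow_eq_of_mem_wilmshurstZeros {N : ℕ} (hN : 0 < N) {z : ℂ} (hz : z ∈ wilmshurstZeros N) :
    z ^ N = -conj z ^ N ∧ (z - 1) ^ N = (conj z - 1) ^ N ∧ conj z ≠ z := by
  obtain ⟨x, hx, rfl⟩ := Finset.mem_image.mp hz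
  obtain ⟨hα, hβ1, hβ⟩ := (mem_crossingParameters hN).mp hx
  obtain ⟨hαnorm, hβnorm⟩ := norm_eq_one_of_mem_crossingParameters hN hx
  obtain ⟨hne, hα1⟩ := ne_of_mem_crossingParameters hN hx
  refine ⟨?_, ?_, conj_lineCrossing_ne hαnorm hβnorm hne hα1 hβ1⟩
  · conv_lhs => rw [lineCrossing_eq_mul_conj hαnorm hβnorm hne, mul_pow, hα, neg_one_mul]
  · rw [lineCrossing_sub_one_eq_mul_conj hαnorm hβnorm hne, mul_pow, hβ, one_mul]

theorem succ_mul_le_Znm {n m : ℕ} (h : m < n) : (m + 1) * m ≤ Znm n m := by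
  have hN : 0 < m + 1 := m.succ_pos
  have hcard := card_nondegenerate_zeros_le_Znm h
    ((natDegree_wilmshurstAnalytic_le (m + 1)).trans h)
    (Nat.le_of_lt_succ (natDegree_wilmshurstAntianalytic_lt hN.ne')) (wilmshurstZeros (m + 1))
    (fun z hz => by
      obtain ⟨h0, h1, -⟩ := pow_eq_of_mem_wilmshurstZeros hN hz
      exact harmonicEval_wilmshurst_eq_zero h0 h1)
    (fun z hz => by
      obtain ⟨h0, h1, hreal⟩ := pow_eq_of_mem_wilmshurstZeros hN hz
      exact norm_eval_derivative_wilmshurst_ne hN.ne' h0 h1 hreal)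
  rwa [card_wilmshurstZeros hN, Nat.add_sub_cancel] at hcard

theorem sq_le_Znm {n m : ℕ} (h : m < n) : m ^ 2 ≤ Znm n m :=
  (by nlinarith : m ^ 2 ≤ (m + 1) * m).trans (succ_mul_le_Znm h)

end Wilmshurst

theorem tendsto_natCast_sub_div_atTop (a : ℕ) :
    Tendsto (fun n : ℕ => ((n - a : ℕ) : ℝ) / n) atTop (𝓝 1) := by
  have hlim : Tendsto (fun n : ℕ => 1 - (a : ℝ) / n) atTop (𝓝 1) := by
    simpa using (tendsto_const_div_atTop_nhds_zero_nat (a : ℝ)).const_sub 1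
  refine hlim.congr' ?_
  filter_upwards [eventually_ge_atTop a, eventually_ne_atTop 0] with n hn hn0
  rw [Nat.cast_sub hn, sub_div, div_self (Nat.cast_ne_zero.mpr hn0)]

theorem limsup_Znm_sub_a_div_sq_eq_one_general {m : ℕ → ℕ} (hlt : ∀ᶠ n in atTop, m n < n)
    (hm : Tendsto (fun n : ℕ => (m n : ℝ) / n) atTop (𝓝 1)) :
    Tendsto (fun n : ℕ => (Znm n (m n) : ℝ) / (n : ℝ) ^ 2) atTop (𝓝 1) := by
  have hsq : Tendsto (fun n : ℕ => (m n : ℝ) ^ 2 / (n : ℝ) ^ 2) atTop (𝓝 1) := by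
    simpa [div_pow] using hm.pow 2
  refine tendsto_of_tendsto_of_tendsto_of_le_of_le' hsq tendsto_const_nhds ?_ ?_
  · filter_upwards [hlt] with n hn
    gcongr
    exact_mod_cast sq_le_Znm hn
  · filter_upwards [hlt] with n hn
    exact div_le_one_of_le₀ (by exact_mod_cast Znm_le_sq hn) (by positivity)

/-- Corollary: for any fixed integer `a ≥ 1`,
`limsup_{n → ∞} Z(n, n - a) / n² = 1`. -/
theorem limsup_Znm_sub_a_div_sq_eq_one (a : ℕ) (ha : 1 ≤ a) :
    Filter.limsup (fun n : ℕ => (Znm n (n - a) : ℝ) / (n : ℝ) ^ 2)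
      Filter.atTop = 1 :=
  (limsup_Znm_sub_a_div_sq_eq_one_general
    ((eventually_gt_atTop 0).mono fun _ hn => Nat.sub_lt hn ha)
    (tendsto_natCast_sub_div_atTop a)).limsup_eq
end

section
/- Let p and q be polynomials with real coefficients of degrees n and m with n > m, and let h(z) = p(z) + conj(q(z)). Then there exist bivariate polynomials A and B with real coefficients, each of total degree at most n, such that h(x + iy) = A(x,y) + i·B(x,y) for all real x, y, every monomial appearing in A has even degree in y, and every monomial appearing in B has odd degree in y. Moreover, there exists x₀ ∈ ℝ such that h(x₀) ≠ 0, the derivative of y ↦ h(x₀ + iy) at y = 0 is nonzero, and the (n−1)-st derivative of y ↦ h(x₀ + iy) at y = 0 is nonzero. -/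
open Polynomial

/-!
Write `z = x + iy`. Horner's scheme `f = f(0) + X g` gives `Re f(z) = f(0) + x Re g(z) - y Im g(z)`
and `Im f(z) = x Im g(z) + y Re g(z)` for a real polynomial `f`; by induction the real part contains
only even and the imaginary part only odd powers of `y`. As `conj (q(z)) = q(conj z)` for real `q`,
replacing `i` by `-i` handles the conjugated summand.

For arbitrary complex `p` and `q`, the `k`-th derivative of `y ↦ p(x + iy) + conj (q(x + iy))` at
`y = 0` is the value at `x` of the `k`-th derivative of the polynomial `iᵏ p + (-i)ᵏ q'`, where `q'`
has the conjugate coefficients of `q`. If `deg q < deg p = n`, that polynomial has degree `n`, so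
for each `k ≤ n` the derivative vanishes at only finitely many real `x`.
-/

section Parity

variable {R : Type*} [CommRing R]

variable (R) in
/-- The bivariate polynomials `A(x, y)` of total degree at most `n` all of whose monomials have
degree in `y` congruent to `r` modulo `2`. The parity condition is encoded as weighted homogeneity,
for the `ZMod 2`-valued weights `0` of `x` and `1` of `y`. -/
noncomputable def parityPart (n : ℕ) (r : ZMod 2) : Submodule R (MvPolynomial (Fin 2) R) :=
  MvPolynomial.restrictTotalDegree (Fin 2) R n ⊓
    MvPolynomial.weightedHomogeneousSubmodule R ![0, 1] r

variable {n : ℕ} {r : ZMod 2} {A : MvPolynomial (Fin 2) R}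

theorem mem_parityPart :
    A ∈ parityPart R n r ↔ A.totalDegree ≤ n ∧ A.IsWeightedHomogeneous ![0, 1] r := by
  rw [parityPart, Submodule.mem_inf, MvPolynomial.mem_restrictTotalDegree,
    MvPolynomial.mem_weightedHomogeneousSubmodule]

theorem natCast_apply_one_of_mem_parityPart (hA : A ∈ parityPart R n r) {d : Fin 2 →₀ ℕ}
    (hd : d ∈ A.support) : (d 1 : ZMod 2) = r := by
  rw [← (mem_parityPart.1 hA).2 (MvPolynomial.mem_support_iff.1 hd)]
  simp [Finsupp.weight_apply, Finsupp.sum_fintype]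

theorem C_mem_parityPart (c : R) : MvPolynomial.C c ∈ parityPart R n 0 :=
  mem_parityPart.2 ⟨by simp, MvPolynomial.isWeightedHomogeneous_C _ c⟩

theorem X_mul_mem_parityPart (i : Fin 2) (hA : A ∈ parityPart R n r) {s : ZMod 2}
    (hs : ![0, 1] i + r = s) : MvPolynomial.X i * A ∈ parityPart R (n + 1) s := by
  subst hs
  obtain ⟨hdeg, hpar⟩ := mem_parityPart.1 hA
  refine mem_parityPart.2 ⟨?_, (MvPolynomial.isWeightedHomogeneous_X R _ i).mul hpar⟩
  have hX : (MvPolynomial.X i : MvPolynomial (Fin 2) R).totalDegree ≤ 1 := by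
    simpa [MvPolynomial.X] using MvPolynomial.totalDegree_monomial_le (Finsupp.single i 1) (1 : R)
  have := MvPolynomial.totalDegree_mul (MvPolynomial.X i) A
  omega

theorem exists_parityPart_aeval_add_mul_eq (S : Type*) [CommRing S] [Algebra R S] {f : R[X]}
    (hf : f.natDegree ≤ n) :
    ∃ A ∈ parityPart R n 0, ∃ B ∈ parityPart R n 1, ∀ i : S, i ^ 2 = -1 → ∀ x y : S,
      aeval (x + y * i) f = MvPolynomial.aeval ![x, y] A + i * MvPolynomial.aeval ![x, y] B := by
  induction n generalizing f with
  | zero =>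
    refine ⟨.C (f.coeff 0), C_mem_parityPart _, 0, zero_mem _, fun i _ x y => ?_⟩
    rw [eq_C_of_natDegree_le_zero hf]
    simp
  | succ n ih =>
    have hg : f.divX.natDegree ≤ n := by
      rw [natDegree_divX_eq_natDegree_tsub_one]
      omega
    obtain ⟨A, hA, B, hB, h⟩ := ih hg
    have hxA : .X 0 * A ∈ parityPart R (n + 1) 0 := X_mul_mem_parityPart 0 hA (by decide)
    have hyA : .X 1 * A ∈ parityPart R (n + 1) 1 := X_mul_mem_parityPart 1 hA (by decide)
    have hxB : .X 0 * B ∈ parityPart R (n + 1) 1 := X_mul_mem_parityPart 0 hB (by decide)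
    have hyB : .X 1 * B ∈ parityPart R (n + 1) 0 := X_mul_mem_parityPart 1 hB (by decide)
    refine ⟨_, add_mem (sub_mem hxA hyB) (C_mem_parityPart (f.coeff 0)), _, add_mem hxB hyA,
      fun i hi x y => ?_⟩
    nth_rw 1 [← divX_mul_X_add f]
    simp only [map_add, map_sub, map_mul, aeval_X, aeval_C, h i hi, MvPolynomial.aeval_X,
      MvPolynomial.aeval_C, Matrix.cons_val_zero, Matrix.cons_val_one]
    linear_combination y * MvPolynomial.aeval ![x, y] B * hi

end Parity

theorem exists_parityPart_aeval_add_conj_aeval_eq {p q : ℝ[X]} {n : ℕ} (hp : p.natDegree ≤ n)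
    (hq : q.natDegree ≤ n) :
    ∃ A ∈ parityPart ℝ n 0, ∃ B ∈ parityPart ℝ n 1, ∀ x y : ℝ,
      aeval (x + y * Complex.I) p + starRingEnd ℂ (aeval (x + y * Complex.I) q) =
        (MvPolynomial.eval ![x, y] A : ℝ) + Complex.I * (MvPolynomial.eval ![x, y] B : ℝ) := by
  obtain ⟨A, hA, B, hB, hAB⟩ := exists_parityPart_aeval_add_mul_eq ℂ hp
  obtain ⟨A', hA', B', hB', hAB'⟩ := exists_parityPart_aeval_add_mul_eq ℂ hq
  refine ⟨A + A', add_mem hA hA', B - B', sub_mem hB hB', fun x y => ?_⟩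
  have hconj : starRingEnd ℂ (x + y * Complex.I) = x + y * -Complex.I := by simp
  have hreal (F : MvPolynomial (Fin 2) ℝ) :
      MvPolynomial.aeval ![(x : ℂ), y] F = (MvPolynomial.eval ![x, y] F : ℝ) := by
    have hxy : ![(x : ℂ), y] = algebraMap ℝ ℂ ∘ ![x, y] := by
      ext j
      fin_cases j <;> rfl
    rw [hxy, MvPolynomial.aeval_algebraMap_apply, MvPolynomial.aeval_eq_eval]
    rfl
  rw [← aeval_conj, hconj, hAB _ Complex.I_sq, hAB' _ (by simp), hreal, hreal, hreal, hreal,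
    map_add, map_sub, Complex.ofReal_add, Complex.ofReal_sub]
  ring

theorem iterate_derivative_ne_zero {R : Type*} [Semiring R] [IsAddTorsionFree R] {p : R[X]}
    (hp : p ≠ 0) {k : ℕ} (hk : k ≤ p.natDegree) : derivative^[k] p ≠ 0 := by
  induction k generalizing p with
  | zero => exact hp
  | succ k ih =>
    rw [Function.iterate_succ_apply]
    refine ih (mt derivative_eq_zero.1 (by omega)) ?_
    rw [natDegree_derivative]
    omega

theorem exists_mem_forall_eval_ne_zero {R ι : Type*} [CommRing R] [IsDomain R] {s : Set R}
    (hs : s.Infinite) {t : Finset ι} {f : ι → R[X]} (hf : ∀ i ∈ t, f i ≠ 0) :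
    ∃ x ∈ s, ∀ i ∈ t, (f i).eval x ≠ 0 := by
  by_contra! h
  refine Finset.prod_ne_zero_iff.2 hf (eq_zero_of_infinite_isRoot _ (hs.mono fun x hx => ?_))
  obtain ⟨i, hi, hfx⟩ := h x hx
  exact (eval_prod t f x).trans (Finset.prod_eq_zero hi hfx)

section AffineLine

variable {𝕜 𝕜' : Type*} [NontriviallyNormedField 𝕜] [NontriviallyNormedField 𝕜']
  [NormedAlgebra 𝕜 𝕜'] (p : 𝕜'[X]) (a c : 𝕜')

theorem contDiff_eval_add_smul {n : WithTop ℕ∞} :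
    ContDiff 𝕜 n fun t : 𝕜 => p.eval (a + t • c) := by
  have hline : ContDiff 𝕜 n fun t : 𝕜 => a + t • c := by fun_prop
  have hp : ContDiff 𝕜' n fun z => p.eval z := by simpa using p.contDiff_aeval (𝕜 := 𝕜') n
  exact (hp.restrict_scalars 𝕜).comp hline

theorem deriv_eval_add_smul (t : 𝕜) :
    deriv (fun t : 𝕜 => p.eval (a + t • c)) t = c * (derivative p).eval (a + t • c) := by
  have hline : HasDerivAt (fun t : 𝕜 => a + t • c) c t := by
    simpa using ((hasDerivAt_id t).smul_const c).const_add a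
  rw [mul_comm]
  exact ((p.hasDerivAt _).comp t hline).deriv

theorem iteratedDeriv_eval_add_smul (k : ℕ) :
    iteratedDeriv k (fun t : 𝕜 => p.eval (a + t • c)) =
      fun t => (C (c ^ k) * derivative^[k] p).eval (a + t • c) := by
  induction k with
  | zero => simp
  | succ k ih =>
    ext t
    rw [iteratedDeriv_succ, ih, deriv_eval_add_smul, derivative_C_mul, ← eval_C_mul, ← mul_assoc,
      ← C_mul, ← pow_succ', Function.iterate_succ_apply']

end AffineLine

theorem iteratedDeriv_eval_add_conj_eval (p q : ℂ[X]) (x : ℝ) (k : ℕ) :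
    iteratedDeriv k (fun y : ℝ => p.eval (x + y * Complex.I) +
      starRingEnd ℂ (q.eval (x + y * Complex.I))) 0 =
      (derivative^[k] (C (Complex.I ^ k) * p +
        C ((-Complex.I) ^ k) * q.map (starRingEnd ℂ))).eval (x : ℂ) := by
  have hline (y : ℝ) : p.eval (x + y * Complex.I) + starRingEnd ℂ (q.eval (x + y * Complex.I)) =
      p.eval (x + y • Complex.I) + (q.map (starRingEnd ℂ)).eval (x + y • -Complex.I) := by
    rw [← eval_map_apply]
    simp
  simp_rw [hline]
  rw [iteratedDeriv_fun_add (contDiff_eval_add_smul ..).contDiffAt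
    (contDiff_eval_add_smul ..).contDiffAt, iteratedDeriv_eval_add_smul,
    iteratedDeriv_eval_add_smul, iterate_map_add, iterate_derivative_C_mul,
    iterate_derivative_C_mul]
  simp

theorem exists_real_forall_iteratedDeriv_ne_zero {p q : ℂ[X]} (hqp : q.natDegree < p.natDegree) :
    ∃ x : ℝ, ∀ k ≤ p.natDegree, iteratedDeriv k (fun y : ℝ => p.eval (x + y * Complex.I) +
      starRingEnd ℂ (q.eval (x + y * Complex.I))) 0 ≠ 0 := by
  let r (k : ℕ) : ℂ[X] := C (Complex.I ^ k) * p + C ((-Complex.I) ^ k) * q.map (starRingEnd ℂ)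
  have hdeg (k : ℕ) : (r k).natDegree = p.natDegree := by
    have hp : (C (Complex.I ^ k) * p).natDegree = p.natDegree := natDegree_C_mul (by simp)
    rw [natDegree_add_eq_left_of_natDegree_lt, hp]
    exact (natDegree_C_mul_le _ _).trans_lt (by rwa [natDegree_map, hp])
  have hder (k : ℕ) (hk : k ∈ Finset.Iic p.natDegree) : derivative^[k] (r k) ≠ 0 :=
    iterate_derivative_ne_zero (ne_zero_of_natDegree_gt (hqp.trans_eq (hdeg k).symm))
      ((Finset.mem_Iic.1 hk).trans_eq (hdeg k).symm)
  obtain ⟨_, ⟨x, rfl⟩, hx⟩ := exists_mem_forall_eval_ne_zero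
    (Set.infinite_range_of_injective Complex.ofReal_injective) hder
  refine ⟨x, fun k hk => ?_⟩
  rw [iteratedDeriv_eval_add_conj_eval]
  exact hx k (Finset.mem_Iic.2 hk)

theorem exists_map_ofReal_eq {p : ℂ[X]} (hp : ∀ k, (p.coeff k).im = 0) :
    ∃ f : ℝ[X], f.map (algebraMap ℝ ℂ) = p :=
  (lifts_iff_set_range p).1 ((lifts_iff_coeff_lifts p).2 fun k => ⟨(p.coeff k).re,
    Complex.ext rfl (hp k).symm⟩)

/-- Lemma on the structure of the real and imaginary parts of a harmonic
polynomial with real coefficients, and the existence of a good real point `x₀`. -/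
theorem harmonic_real_imag_parts_structure
    (n m : ℕ) (p q : Polynomial ℂ)
    (hpreal : ∀ k, (p.coeff k).im = 0) (hqreal : ∀ k, (q.coeff k).im = 0)
    (hp : p.natDegree = n) (hq : q.natDegree = m) (hnm : m < n) :
    (∃ A B : MvPolynomial (Fin 2) ℝ,
      A.totalDegree ≤ n ∧ B.totalDegree ≤ n ∧
      (∀ x y : ℝ,
        p.eval ((x : ℂ) + (y : ℂ) * Complex.I)
          + (starRingEnd ℂ) (q.eval ((x : ℂ) + (y : ℂ) * Complex.I))
        = ((MvPolynomial.eval ![x, y] A : ℝ) : ℂ)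
          + Complex.I * ((MvPolynomial.eval ![x, y] B : ℝ) : ℂ)) ∧
      (∀ d ∈ A.support, Even (d 1)) ∧
      (∀ d ∈ B.support, Odd (d 1))) ∧
    ∃ x₀ : ℝ,
      (p.eval (x₀ : ℂ) + (starRingEnd ℂ) (q.eval (x₀ : ℂ)) ≠ 0) ∧
      deriv (fun y : ℝ =>
        p.eval ((x₀ : ℂ) + (y : ℂ) * Complex.I)
          + (starRingEnd ℂ) (q.eval ((x₀ : ℂ) + (y : ℂ) * Complex.I))) 0 ≠ 0 ∧
      iteratedDeriv (n - 1) (fun y : ℝ =>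
        p.eval ((x₀ : ℂ) + (y : ℂ) * Complex.I)
          + (starRingEnd ℂ) (q.eval ((x₀ : ℂ) + (y : ℂ) * Complex.I))) 0 ≠ 0 := by
  subst hp hq
  obtain ⟨x₀, hx₀⟩ := exists_real_forall_iteratedDeriv_ne_zero hnm
  refine ⟨?_, x₀, ?_, ?_, hx₀ _ (Nat.sub_le _ 1)⟩
  · obtain ⟨f, rfl⟩ := exists_map_ofReal_eq hpreal
    obtain ⟨g, rfl⟩ := exists_map_ofReal_eq hqreal
    simp only [natDegree_map] at hnm ⊢
    obtain ⟨A, hA, B, hB, h⟩ := exists_parityPart_aeval_add_conj_aeval_eq le_rfl hnm.le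
    refine ⟨A, B, (mem_parityPart.1 hA).1, (mem_parityPart.1 hB).1, fun x y => ?_,
      fun d hd => ?_, fun d hd => ?_⟩
    · rw [eval_map_algebraMap, eval_map_algebraMap, h]
    · exact ZMod.natCast_eq_zero_iff_even.1 (natCast_apply_one_of_mem_parityPart hA hd)
    · exact ZMod.natCast_eq_one_iff_odd.1 (natCast_apply_one_of_mem_parityPart hB hd)
  · simpa using hx₀ 0 (Nat.zero_le _)
  · simpa only [iteratedDeriv_one] using hx₀ 1 (Nat.one_le_of_lt hnm)
end
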